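/- arXiv:1206.0017 — 3 statements merged into one kernel-verified Lean document; each statement's English description precedes it below -/
import Mathlib

section
/- Let (E₀,E₁), (F₀,F₁), (G₀,G₁) be Banach couples and let T be a bounded bilinear operator from (E₀+E₁)×(F₀+F₁) into G₀+G₁ whose restrictions T|_{E_k×F_k} are compact from E_k×F_k into G_k for k=0,1. Then for every function parameter ρ of class ℬ^{+−}, with γ(t) = 1/ρ̄(t⁻¹) and 1 ≤ p,q,r ≤ ∞ satisfying 1/r = 1/p + 1/q − 1, T is compact from (E₀,E₁)_{γ,p;J} × (F₀,F₁)_{ρ,q;J} into (G₀,G₁)_{ρ,r;J}. -/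
open Filter Set MeasureTheory ENNReal NNReal

noncomputable section

/-! ### Function parameters -/

/-- `rbar ρ s = sup_{t>0} ρ(s t)/ρ(t)`. -/
def rbar (ρ : ℝ → ℝ) (s : ℝ) : ℝ := sSup {r : ℝ | ∃ t > 0, r = ρ (s * t) / ρ t}

/-- The class `ℬ` of function parameters. -/
structure IsClassB (ρ : ℝ → ℝ) : Prop where
  pos : ∀ t > 0, 0 < ρ t
  cont : ContinuousOn ρ (Set.Ioi 0)
  one : ρ 1 = 1
  bdd : ∀ s > 0, BddAbove {r : ℝ | ∃ t > 0, r = ρ (s * t) / ρ t}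

/-- The class `ℬ^{+-}` of function parameters. -/
structure IsClassBpm (ρ : ℝ → ℝ) extends IsClassB ρ : Prop where
  integ : MeasureTheory.IntegrableOn (fun t => min 1 t⁻¹ * rbar ρ t * t⁻¹) (Set.Ioi 0)

/-- Pseudo-concavity of a function parameter. -/
def IsPseudoConcave (ρ : ℝ → ℝ) : Prop :=
  ∃ C > 0, ∀ s > 0, ∀ t > 0, ρ t ≤ C * max 1 (t / s) * ρ s

/-! ### `ℓ^q` norms of two-sided sequences with values in `ℝ≥0∞` -/

/-- The `ℓ^q(ℤ)` norm of a sequence of extended reals. -/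
def eLq (q : ℝ≥0∞) (a : ℤ → ℝ≥0∞) : ℝ≥0∞ :=
  if q = ∞ then ⨆ n, a n else (∑' n, a n ^ q.toReal) ^ (1 / q.toReal)

/-! ### Extended-real-valued norms -/

/-- `N : V → ℝ≥0∞` is a complete (Banach) extended norm; its finiteness set is the
underlying Banach space. -/
structure IsENorm {V : Type*} [AddCommGroup V] [Module ℝ V] (N : V → ℝ≥0∞) : Prop where
  map_zero : N 0 = 0
  eq_zero : ∀ x, N x = 0 → x = 0
  add_le : ∀ x y, N (x + y) ≤ N x + N y
  smul : ∀ (c : ℝ) (x : V), N (c • x) = ENNReal.ofReal |c| * N x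
  complete : ∀ u : ℕ → V, (∀ n, N (u n) ≠ ∞) →
    (∀ ε : ℝ, 0 < ε → ∃ n₀ : ℕ, ∀ m ≥ n₀, ∀ n ≥ n₀, N (u m - u n) < ENNReal.ofReal ε) →
    ∃ x, N x ≠ ∞ ∧ Filter.Tendsto (fun n => N (u n - x)) Filter.atTop (nhds 0)

/-! ### Banach couples realized inside an ambient space -/

section Couple

variable {E₀ E₁ V : Type*} [NormedAddCommGroup E₀] [NormedSpace ℝ E₀]
  [NormedAddCommGroup E₁] [NormedSpace ℝ E₁] [AddCommGroup V] [Module ℝ V]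

/-- The extended norm on the ambient space induced by the embedding of one Banach space:
`∞` outside the range of the embedding. -/
def enormOf {E : Type*} [NormedAddCommGroup E] [NormedSpace ℝ E] (i : E →ₗ[ℝ] V) (x : V) : ℝ≥0∞ :=
  ⨅ (a : E) (_ : i a = x), (‖a‖₊ : ℝ≥0∞)

/-- The `K`-functional of the couple `(E₀, E₁)`. -/
def eKfun (i₀ : E₀ →ₗ[ℝ] V) (i₁ : E₁ →ₗ[ℝ] V) (t : ℝ) (x : V) : ℝ≥0∞ :=
  ⨅ (a : E₀) (b : E₁) (_ : x = i₀ a + i₁ b), ENNReal.ofReal (‖a‖ + t * ‖b‖)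

/-- The extended norm of `E₀ + E₁`. -/
def esumNorm (i₀ : E₀ →ₗ[ℝ] V) (i₁ : E₁ →ₗ[ℝ] V) (x : V) : ℝ≥0∞ := eKfun i₀ i₁ 1 x

/-- The extended norm of `E₀ ∩ E₁`. -/
def einterNorm (i₀ : E₀ →ₗ[ℝ] V) (i₁ : E₁ →ₗ[ℝ] V) (x : V) : ℝ≥0∞ :=
  max (enormOf i₀ x) (enormOf i₁ x)

/-- The extended norm of the interpolation space `(E₀,E₁)_{ρ,q;K}`. -/
def eKNorm (i₀ : E₀ →ₗ[ℝ] V) (i₁ : E₁ →ₗ[ℝ] V) (ρ : ℝ → ℝ) (q : ℝ≥0∞) (x : V) : ℝ≥0∞ :=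
  eLq q (fun n => eKfun i₀ i₁ ((2 : ℝ) ^ n) x / ENNReal.ofReal (ρ ((2 : ℝ) ^ n)))

/-- `(a, b)` is a `J`-representation of `x`: `u_n = a n = b n ∈ E₀ ∩ E₁` and
`x = ∑_{n ∈ ℤ} u_n` with convergence in `E₀ + E₁`. -/
def IsJRep (i₀ : E₀ →ₗ[ℝ] V) (i₁ : E₁ →ₗ[ℝ] V) (x : V) (a : ℤ → E₀) (b : ℤ → E₁) : Prop :=
  (∀ n, i₀ (a n) = i₁ (b n)) ∧
  ∀ ε : ℝ, 0 < ε → ∃ F : Finset ℤ, ∀ G : Finset ℤ, F ⊆ G →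
    esumNorm i₀ i₁ (x - ∑ n ∈ G, i₀ (a n)) < ENNReal.ofReal ε

/-- The extended norm of the interpolation space `(E₀,E₁)_{ρ,q;J}`. -/
def eJNorm (i₀ : E₀ →ₗ[ℝ] V) (i₁ : E₁ →ₗ[ℝ] V) (ρ : ℝ → ℝ) (q : ℝ≥0∞) (x : V) : ℝ≥0∞ :=
  ⨅ (a : ℤ → E₀) (b : ℤ → E₁) (_ : IsJRep i₀ i₁ x a b),
    eLq q (fun n => ENNReal.ofReal (max ‖a n‖ ((2 : ℝ) ^ n * ‖b n‖) / ρ ((2 : ℝ) ^ n)))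

/-- `(E₀, E₁)` is a Banach couple: both spaces are complete and continuously embedded
in the Hausdorff topological vector space `V`. -/
structure IsBanachCouple [TopologicalSpace V] (i₀ : E₀ →ₗ[ℝ] V) (i₁ : E₁ →ₗ[ℝ] V) : Prop where
  t2 : T2Space V
  contAdd : ContinuousAdd V
  contSMul : ContinuousSMul ℝ V
  complete₀ : CompleteSpace E₀
  complete₁ : CompleteSpace E₁
  inj₀ : Function.Injective i₀
  inj₁ : Function.Injective i₁
  cont₀ : Continuous i₀
  cont₁ : Continuous i₁

/-- `N` is (the extended norm of) an intermediate space for the couple `(E₀, E₁)`. -/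
def IsIntermediate (i₀ : E₀ →ₗ[ℝ] V) (i₁ : E₁ →ₗ[ℝ] V) (N : V → ℝ≥0∞) : Prop :=
  IsENorm N ∧
  (∃ C > 0, ∀ x : V, N x ≤ ENNReal.ofReal C * einterNorm i₀ i₁ x) ∧
  (∃ C > 0, ∀ x : V, esumNorm i₀ i₁ x ≤ ENNReal.ofReal C * N x)

/-- `N` is an intermediate space of class `J_ρ(E₀,E₁)`, i.e. `(E₀,E₁)_{ρ,1;J} ↪ N`. -/
def IsClassJ (i₀ : E₀ →ₗ[ℝ] V) (i₁ : E₁ →ₗ[ℝ] V) (ρ : ℝ → ℝ) (N : V → ℝ≥0∞) : Prop :=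
  IsIntermediate i₀ i₁ N ∧ ∃ C > 0, ∀ x : V, N x ≤ ENNReal.ofReal C * eJNorm i₀ i₁ ρ 1 x

/-- `N` is an intermediate space of class `K_ρ(E₀,E₁)`, i.e. `N ↪ (E₀,E₁)_{ρ,∞;K}`. -/
def IsClassK (i₀ : E₀ →ₗ[ℝ] V) (i₁ : E₁ →ₗ[ℝ] V) (ρ : ℝ → ℝ) (N : V → ℝ≥0∞) : Prop :=
  IsIntermediate i₀ i₁ N ∧ ∃ C > 0, ∀ x : V, eKNorm i₀ i₁ ρ ⊤ x ≤ ENNReal.ofReal C * N x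

end Couple

/-! ### The approximation hypothesis (AP) -/

/-- The couple with extended norms `N₀, N₁` satisfies the approximation hypothesis (AP). -/
def SatisfiesAP {V : Type*} [AddCommGroup V] [Module ℝ V] (N₀ N₁ : V → ℝ≥0∞) : Prop :=
  ∃ (P Pp Pm : ℕ → V →ₗ[ℝ] V) (C : ℝ≥0∞) (c : ℕ → ℝ≥0∞),
    0 < C ∧ C ≠ ∞ ∧ Filter.Tendsto c Filter.atTop (nhds 0) ∧
    (∀ (n : ℕ) (x y : V), N₀ x ≠ ∞ → N₁ y ≠ ∞ →
      (P n (x + y) + Pp n (x + y) + Pm n (x + y) = x + y ∧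
        N₀ (P n (x + y)) ≠ ∞ ∧ N₁ (P n (x + y)) ≠ ∞)) ∧
    (∀ n x, N₀ (P n x) ≤ C * N₀ x) ∧ (∀ n x, N₁ (P n x) ≤ C * N₁ x) ∧
    (∀ n x, N₀ (Pp n x) ≤ C * N₀ x) ∧ (∀ n x, N₁ (Pp n x) ≤ C * N₁ x) ∧
    (∀ n x, N₀ (Pm n x) ≤ C * N₀ x) ∧ (∀ n x, N₁ (Pm n x) ≤ C * N₁ x) ∧
    (∀ n x, N₀ x ≠ ∞ → N₁ (Pp n x) ≤ c n * N₀ x) ∧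
    (∀ n x, N₁ x ≠ ∞ → N₀ (Pm n x) ≤ c n * N₁ x)

/-! ### Bilinear operators -/

section Bilinear

variable {VE VF VG : Type*} [AddCommGroup VG]

/-- The norm of a bilinear operator between spaces given by extended norms. -/
def eBilNorm (NE : VE → ℝ≥0∞) (NF : VF → ℝ≥0∞) (NG : VG → ℝ≥0∞) (T : VE → VF → VG) : ℝ≥0∞ :=
  ⨆ (x : VE) (_ : NE x ≤ 1) (y : VF) (_ : NF y ≤ 1), NG (T x y)

/-- Boundedness of a bilinear operator between spaces given by extended norms. -/
def eBilBdd (NE : VE → ℝ≥0∞) (NF : VF → ℝ≥0∞) (NG : VG → ℝ≥0∞) (T : VE → VF → VG) : Prop :=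
  ∃ M : ℝ≥0, ∀ x y, NG (T x y) ≤ (M : ℝ≥0∞) * NE x * NF y

/-- Compactness of a bilinear operator: the image of the product of unit balls is
totally bounded in the target. -/
def eBilCompact (NE : VE → ℝ≥0∞) (NF : VF → ℝ≥0∞) (NG : VG → ℝ≥0∞) (T : VE → VF → VG) : Prop :=
  ∀ ε : ℝ, 0 < ε → ∃ D : Finset VG, ∀ x y, NE x ≤ 1 → NF y ≤ 1 →
    ∃ c ∈ D, NG (T x y - c) < ENNReal.ofReal ε

end Bilinear

/-! ### A generic K-functional for a couple given by two extended norms -/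

/-- Generic `K`-functional for a couple described by two extended norms on `W`. -/
def eKgen {W : Type*} [AddCommGroup W] (N₀ N₁ : W → ℝ≥0∞) (t : ℝ) (x : W) : ℝ≥0∞ :=
  ⨅ y : W, (N₀ (x - y) + ENNReal.ofReal t * N₁ y)

/-- The `(ρ,q;K)`-interpolation extended norm for a couple given by two extended norms. -/
def eKNormGen {W : Type*} [AddCommGroup W] (N₀ N₁ : W → ℝ≥0∞) (ρ : ℝ → ℝ) (q : ℝ≥0∞)
    (x : W) : ℝ≥0∞ :=
  eLq q (fun n => eKgen N₀ N₁ ((2 : ℝ) ^ n) x / ENNReal.ofReal (ρ ((2 : ℝ) ^ n)))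

/-! ### Lions and Persson approximation conditions -/

section LP

variable {E₀ E₁ V : Type*} [NormedAddCommGroup E₀] [NormedSpace ℝ E₀]
  [NormedAddCommGroup E₁] [NormedSpace ℝ E₁] [AddCommGroup V] [Module ℝ V]

/-- Lions' approximation condition for the couple `(E₀, E₁)`. -/
def LionsCondition (i₀ : E₀ →ₗ[ℝ] V) (i₁ : E₁ →ₗ[ℝ] V) : Prop :=
  ∃ P : ℕ → V →ₗ[ℝ] V,
    (∀ (n : ℕ) (a : E₀), einterNorm i₀ i₁ (P n (i₀ a)) ≠ ∞) ∧
    (∀ (n : ℕ) (b : E₁), einterNorm i₀ i₁ (P n (i₁ b)) ≠ ∞) ∧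
    (∀ a : E₀, Filter.Tendsto (fun n => enormOf i₀ (P n (i₀ a) - i₀ a)) Filter.atTop (nhds 0)) ∧
    (∀ b : E₁, Filter.Tendsto (fun n => enormOf i₁ (P n (i₁ b) - i₁ b)) Filter.atTop (nhds 0))

/-- Persson's approximation condition for the couple `(E₀, E₁)`. -/
def PerssonCondition (i₀ : E₀ →ₗ[ℝ] V) (i₁ : E₁ →ₗ[ℝ] V) : Prop :=
  ∀ K : Set E₀, IsCompact K →
    ∃ (C : ℝ) (P : Set (V →ₗ[ℝ] V)), 0 < C ∧
      (∀ p ∈ P,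
        (∀ a : E₀, einterNorm i₀ i₁ (p (i₀ a)) ≠ ∞ ∧
          enormOf i₀ (p (i₀ a)) ≤ ENNReal.ofReal (C * ‖a‖)) ∧
        (∀ b : E₁, einterNorm i₀ i₁ (p (i₁ b)) ≠ ∞ ∧
          enormOf i₁ (p (i₁ b)) ≤ ENNReal.ofReal (C * ‖b‖))) ∧
      (∀ ε > 0, ∃ p ∈ P, ∀ x ∈ K, enormOf i₀ (p (i₀ x) - i₀ x) < ENNReal.ofReal ε)

end LP

end



lemma eLq_top (a : ℤ → ℝ≥0∞) : eLq ∞ a = ⨆ n, a n := by simp [eLq]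

lemma eLq_ne_top {q : ℝ≥0∞} (hq : q ≠ ∞) (a : ℤ → ℝ≥0∞) :
    eLq q a = (∑' n, a n ^ q.toReal) ^ (1 / q.toReal) := by simp [eLq, hq]

lemma toReal_pos_of_one_le {q : ℝ≥0∞} (hq : 1 ≤ q) (h : q ≠ ∞) : 1 ≤ q.toReal := by
  have := (ENNReal.toReal_le_toReal (by simp) h).2 hq
  simpa using this

lemma eLq_mono (q : ℝ≥0∞) {a b : ℤ → ℝ≥0∞} (h : ∀ n, a n ≤ b n) : eLq q a ≤ eLq q b := by
  unfold eLq
  split_ifs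
  · exact iSup_mono h
  · refine ENNReal.rpow_le_rpow (ENNReal.tsum_le_tsum fun n => ?_) (by positivity)
    exact ENNReal.rpow_le_rpow (h n) (by positivity)

lemma le_eLq {q : ℝ≥0∞} (hq : 1 ≤ q) (a : ℤ → ℝ≥0∞) (n : ℤ) : a n ≤ eLq q a := by
  by_cases h : q = ∞
  · subst h; rw [eLq_top]; exact le_iSup a n
  · have h1 := toReal_pos_of_one_le hq h
    rw [eLq_ne_top h, one_div, ENNReal.le_rpow_inv_iff (by positivity)]
    exact ENNReal.le_tsum (f := fun n => a n ^ q.toReal) n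

lemma eLq_add_le {q : ℝ≥0∞} (hq : 1 ≤ q) (a b : ℤ → ℝ≥0∞) :
    eLq q (fun n => a n + b n) ≤ eLq q a + eLq q b := by
  by_cases h : q = ∞
  · subst h; simp only [eLq_top]
    exact iSup_le fun n => add_le_add (le_iSup a n) (le_iSup b n)
  · have h1 := toReal_pos_of_one_le hq h
    simp only [eLq_ne_top h]
    have := ENNReal.lintegral_Lp_add_le (μ := Measure.count) (f := a) (g := b) (p := q.toReal)
      (Measurable.of_discrete).aemeasurable (Measurable.of_discrete).aemeasurable h1
    simpa only [lintegral_count, Pi.add_apply] using this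

lemma eLq_const_mul {q : ℝ≥0∞} (hq : 1 ≤ q) (c : ℝ≥0∞) (a : ℤ → ℝ≥0∞) :
    eLq q (fun n => c * a n) = c * eLq q a := by
  by_cases h : q = ∞
  · subst h; simp only [eLq_top, ENNReal.mul_iSup]
  · have h1 := toReal_pos_of_one_le hq h
    simp only [eLq_ne_top h]
    simp_rw [ENNReal.mul_rpow_of_nonneg _ _ (show 0 ≤ q.toReal by positivity)]
    rw [ENNReal.tsum_mul_left, ENNReal.mul_rpow_of_nonneg _ _ (by positivity), ← ENNReal.rpow_mul,
      mul_one_div_cancel (by positivity), ENNReal.rpow_one]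

lemma eLq_indicator_ne_top {q : ℝ≥0∞} (hq : 1 ≤ q) (F : Finset ℤ) :
    eLq q (fun n => if n ∈ F then 1 else 0) ≠ ∞ := by
  by_cases h : q = ∞
  · subst h; rw [eLq_top]
    refine ne_top_of_le_ne_top ENNReal.one_ne_top (iSup_le fun n => ?_)
    split_ifs <;> simp
  · have h1 := toReal_pos_of_one_le hq h
    rw [eLq_ne_top h]
    refine ENNReal.rpow_ne_top_of_nonneg (by positivity) ?_
    rw [tsum_eq_sum (s := F)]
    · refine (ENNReal.sum_ne_top).2 fun n hn => ?_
      simp [hn]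
    · intro n hn
      simp [hn]; positivity

lemma eLq_one (a : ℤ → ℝ≥0∞) : eLq 1 a = ∑' n, a n := by
  simp [eLq]

lemma tsum_shift (j : ℤ) (a : ℤ → ℝ≥0∞) : ∑' k, a (j - k) = ∑' k, a k :=
  (Equiv.subLeft j).tsum_eq a

/-- pointwise Hölder -/
lemma young_aux {p q s : ℝ} (hp : 1 ≤ p) (hq : 1 ≤ q) (hs : 0 ≤ s)
    (h : s + 1 = 1 / p + 1 / q) (a b : ℤ → ℝ≥0∞) (j : ℤ) :
    ∑' k, a k * b (j - k) ≤ (∑' k, a k ^ p * b (j - k) ^ q) ^ s *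
      ((∑' k, a k ^ p) ^ (1 / p - s) * (∑' k, b k ^ q) ^ (1 / q - s)) := by
  have hp0 : 0 < p := by linarith
  have hq0 : 0 < q := by linarith
  have hp1 : 1 / p ≤ 1 := by rw [div_le_one hp0]; exact hp
  have hq1 : 1 / q ≤ 1 := by rw [div_le_one hq0]; exact hq
  let f : Fin 3 → ℤ → ℝ≥0∞ := ![fun k => a k ^ p * b (j - k) ^ q, fun k => a k ^ p,
    fun k => b (j - k) ^ q]
  let w : Fin 3 → ℝ := ![s, 1 / p - s, 1 / q - s]
  have key := ENNReal.lintegral_prod_norm_pow_le (μ := (Measure.count : Measure ℤ)) Finset.univ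
    (f := f) (p := w) (fun i _ => (Measurable.of_discrete).aemeasurable)
    (by simp [Fin.sum_univ_three, w]; simp at h; linarith)
    (by intro i _; fin_cases i <;> simp [w] <;> simp at h hp1 hq1 <;> linarith)
  simp only [lintegral_count, Fin.prod_univ_three] at key
  change ∑' k, (a k ^ p * b (j - k) ^ q) ^ s * (a k ^ p) ^ (1 / p - s) *
    (b (j - k) ^ q) ^ (1 / q - s) ≤ (∑' k, a k ^ p * b (j - k) ^ q) ^ s *
      (∑' k, a k ^ p) ^ (1 / p - s) * (∑' k, b (j - k) ^ q) ^ (1 / q - s) at key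
  rw [tsum_shift j (fun k => b k ^ q), mul_assoc] at key
  refine le_trans (le_of_eq ?_) key
  refine tsum_congr fun k => ?_
  rw [ENNReal.mul_rpow_of_nonneg _ _ hs]
  have e1 : (a k ^ p) ^ s * (a k ^ p) ^ (1 / p - s) = a k := by
    rw [← ENNReal.rpow_add_of_nonneg _ _ hs (by linarith), ← ENNReal.rpow_mul]
    rw [show p * (s + (1 / p - s)) = 1 by field_simp; ring, ENNReal.rpow_one]
  have e2 : (b (j - k) ^ q) ^ s * (b (j - k) ^ q) ^ (1 / q - s) = b (j - k) := by
    rw [← ENNReal.rpow_add_of_nonneg _ _ hs (by linarith), ← ENNReal.rpow_mul]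
    rw [show q * (s + (1 / q - s)) = 1 by field_simp; ring, ENNReal.rpow_one]
  calc a k * b (j - k) = ((a k ^ p) ^ s * (a k ^ p) ^ (1 / p - s)) *
        ((b (j - k) ^ q) ^ s * (b (j - k) ^ q) ^ (1 / q - s)) := by rw [e1, e2]
    _ = _ := by ring

lemma tsum_conv (a b : ℤ → ℝ≥0∞) : ∑' j, ∑' k, a k * b (j - k) = (∑' k, a k) * ∑' k, b k := by
  rw [ENNReal.tsum_comm]
  simp_rw [ENNReal.tsum_mul_left]
  have : ∀ k, ∑' j, b (j - k) = ∑' j, b j := fun k => (Equiv.subRight k).tsum_eq b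
  simp_rw [this, ENNReal.tsum_mul_right]

lemma young {p q r : ℝ≥0∞} (hp : 1 ≤ p) (hq : 1 ≤ q) (hr : 1 ≤ r)
    (h : 1 / r + 1 = 1 / p + 1 / q) (a b : ℤ → ℝ≥0∞) :
    eLq r (fun j => ∑' k, a k * b (j - k)) ≤ eLq p a * eLq q b := by
  have hp0 : p ≠ 0 := by rintro rfl; simp at hp
  have hq0 : q ≠ 0 := by rintro rfl; simp at hq
  have hr0 : r ≠ 0 := by rintro rfl; simp at hr
  have hp' : p⁻¹ ≤ 1 := ENNReal.inv_le_one.2 hp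
  have hq' : q⁻¹ ≤ 1 := ENNReal.inv_le_one.2 hq
  simp only [one_div] at h
  by_cases hpt : p = ∞
  · subst hpt
    simp only [ENNReal.inv_top, zero_add] at h
    have h1 : q⁻¹ = 1 := le_antisymm hq' (h ▸ le_add_self)
    have hr1 : r = ∞ := by
      rw [h1] at h
      have : r⁻¹ = 0 := by
        have h2 : r⁻¹ + 1 = 0 + 1 := by rw [h, zero_add]
        exact (ENNReal.add_left_inj ENNReal.one_ne_top).1 h2
      simpa using this
    have hq1 : q = 1 := by simpa using h1
    subst hr1 hq1
    rw [eLq_top, eLq_top, eLq_one]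
    refine iSup_le fun j => ?_
    rw [← tsum_shift j b, ← ENNReal.tsum_mul_left]
    exact ENNReal.tsum_le_tsum fun k => mul_le_mul_left (le_iSup a k) _
  by_cases hqt : q = ∞
  · subst hqt
    simp only [ENNReal.inv_top, add_zero] at h
    have h1 : p⁻¹ = 1 := le_antisymm hp' (h ▸ le_add_self)
    have hr1 : r = ∞ := by
      rw [h1] at h
      have : r⁻¹ = 0 := by
        have h2 : r⁻¹ + 1 = 0 + 1 := by rw [h, zero_add]
        exact (ENNReal.add_left_inj ENNReal.one_ne_top).1 h2
      simpa using this
    have hq1 : p = 1 := by simpa using h1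
    subst hr1 hq1
    rw [eLq_top, eLq_top, eLq_one]
    refine iSup_le fun j => ?_
    rw [← ENNReal.tsum_mul_right]
    exact ENNReal.tsum_le_tsum fun k => mul_le_mul_right (le_iSup b _) _
  have hp1 := toReal_pos_of_one_le hp hpt
  have hq1 := toReal_pos_of_one_le hq hqt
  have hreal : r⁻¹.toReal + 1 = 1 / p.toReal + 1 / q.toReal := by
    have := congrArg ENNReal.toReal h
    rw [ENNReal.toReal_add (by simpa using hr0) (by simp),
      ENNReal.toReal_add (by simpa using hp0) (by simpa using hq0)] at this
    simpa [ENNReal.toReal_inv] using this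
  have key := young_aux hp1 hq1 ENNReal.toReal_nonneg hreal a b
  by_cases hrt : r = ∞
  · subst hrt
    rw [eLq_top, eLq_ne_top hpt, eLq_ne_top hqt]
    refine iSup_le fun j => ?_
    simpa using key j
  have hr1 := toReal_pos_of_one_le hr hrt
  rw [eLq_ne_top hpt, eLq_ne_top hqt, eLq_ne_top hrt]
  set A := ∑' k, a k ^ p.toReal
  set B := ∑' k, b k ^ q.toReal
  set P := p.toReal
  set Q := q.toReal
  set R := r.toReal
  have hRr : r⁻¹.toReal = 1 / R := by simp [ENNReal.toReal_inv, R]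
  rw [hRr] at key hreal
  have hRpos : 0 < R := by linarith
  have hP1 : 1 / P ≤ 1 := by rw [div_le_one (by linarith)]; exact hp1
  have hQ1 : 1 / Q ≤ 1 := by rw [div_le_one (by linarith)]; exact hq1
  rw [one_div R, ENNReal.rpow_inv_le_iff hRpos]
  have step : ∀ j, (∑' k, a k * b (j - k)) ^ R ≤ (∑' k, a k ^ P * b (j - k) ^ Q) *
      (A ^ (1 / P - 1 / R) * B ^ (1 / Q - 1 / R)) ^ R := by
    intro j
    refine (ENNReal.rpow_le_rpow (key j) hRpos.le).trans (le_of_eq ?_)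
    rw [ENNReal.mul_rpow_of_nonneg _ _ hRpos.le, ← ENNReal.rpow_mul,
      one_div_mul_cancel hRpos.ne', ENNReal.rpow_one]
  refine (ENNReal.tsum_le_tsum step).trans ?_
  rw [ENNReal.tsum_mul_right, tsum_conv (fun k => a k ^ P) (fun k => b k ^ Q)]
  have e : ∀ (X : ℝ≥0∞) (t : ℝ), 1 / R ≤ t → X * (X ^ (t - 1 / R)) ^ R = (X ^ t) ^ R := by
    intro X t ht
    rw [← ENNReal.rpow_mul, ← ENNReal.rpow_mul]
    nth_rewrite 1 [← ENNReal.rpow_one X]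
    rw [← ENNReal.rpow_add_of_nonneg _ _ (by norm_num)
      (mul_nonneg (by linarith) hRpos.le)]
    congr 1; field_simp; ring
  rw [ENNReal.mul_rpow_of_nonneg _ _ hRpos.le, ENNReal.mul_rpow_of_nonneg _ _ hRpos.le]
  refine le_of_eq ?_
  change A * B * _ = _
  rw [← e A (1 / P) (by linarith), ← e B (1 / Q) (by linarith)]
  ring

lemma young_one {r : ℝ≥0∞} (hr : 1 ≤ r) (a b : ℤ → ℝ≥0∞) :
    eLq r (fun j => ∑' k, a k * b (j - k)) ≤ (∑' k, a k) * eLq r b := by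
  rw [← eLq_one]
  exact young le_rfl hr hr (by simp [add_comm]) a b


section rb
variable {ρ : ℝ → ℝ}

lemma ratio_le_rbar (hρ : IsClassB ρ) {s t : ℝ} (hs : 0 < s) (ht : 0 < t) :
    ρ (s * t) / ρ t ≤ rbar ρ s := le_csSup (hρ.bdd s hs) ⟨t, ht, rfl⟩

lemma rbar_pos (hρ : IsClassB ρ) {s : ℝ} (hs : 0 < s) : 0 < rbar ρ s :=
  lt_of_lt_of_le (div_pos (hρ.pos _ (mul_pos hs one_pos)) (hρ.pos _ one_pos))
    (ratio_le_rbar hρ hs one_pos)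

lemma rho_le_rbar (hρ : IsClassB ρ) {s : ℝ} (hs : 0 < s) : ρ s ≤ rbar ρ s := by
  simpa [hρ.one] using ratio_le_rbar hρ hs one_pos

lemma rho_mul_le (hρ : IsClassB ρ) {s t : ℝ} (hs : 0 < s) (ht : 0 < t) :
    ρ (s * t) ≤ rbar ρ s * ρ t := by
  have := ratio_le_rbar hρ hs ht
  rwa [div_le_iff₀ (hρ.pos t ht)] at this

lemma rbar_le (hρ : IsClassB ρ) {s C : ℝ} (h : ∀ t > 0, ρ (s * t) ≤ C * ρ t) : rbar ρ s ≤ C := by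
  refine csSup_le ⟨_, 1, one_pos, rfl⟩ ?_
  rintro r ⟨t, ht, rfl⟩
  rw [div_le_iff₀ (hρ.pos t ht)]
  exact h t ht

lemma rbar_mul_le (hρ : IsClassB ρ) {s t : ℝ} (hs : 0 < s) (ht : 0 < t) :
    rbar ρ (s * t) ≤ rbar ρ s * rbar ρ t := by
  refine rbar_le hρ fun u hu => ?_
  rw [mul_assoc, mul_assoc]
  refine (rho_mul_le hρ hs (mul_pos ht hu)).trans ?_
  exact mul_le_mul_of_nonneg_left (rho_mul_le hρ ht hu) (rbar_pos hρ hs).le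

lemma rbar_locBdd (hρ : IsClassB ρ) : ∃ C > 0, ∀ s, 1 / 2 ≤ s → s ≤ 1 → rbar ρ s ≤ C := by
  have hcont : Continuous fun u => ρ (Real.exp u) := by
    refine continuous_iff_continuousAt.2 fun u => ?_
    exact ContinuousAt.comp (f := Real.exp)
      (hρ.cont.continuousAt (Ioi_mem_nhds (Real.exp_pos u))) Real.continuous_exp.continuousAt
  let A : ℕ → Set ℝ := fun n => {u | ∀ v, ρ (Real.exp (u + v)) ≤ n * ρ (Real.exp v)}
  have hA : ∀ n, IsClosed (A n) := by
    intro n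
    have : A n = ⋂ v, {u | ρ (Real.exp (u + v)) ≤ n * ρ (Real.exp v)} := by
      ext u; simp [A]
    rw [this]
    refine isClosed_iInter fun v => isClosed_le ?_ continuous_const
    exact hcont.comp (continuous_id.add continuous_const)
  have hU : ⋃ n, A n = univ := by
    refine eq_univ_of_forall fun u => ?_
    obtain ⟨n, hn⟩ := exists_nat_ge (rbar ρ (Real.exp u))
    refine mem_iUnion.2 ⟨n, fun v => ?_⟩
    rw [Real.exp_add]
    exact (rho_mul_le hρ (Real.exp_pos _) (Real.exp_pos _)).trans
      (mul_le_mul_of_nonneg_right hn (hρ.pos _ (Real.exp_pos _)).le)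
  obtain ⟨n, u0, hu0⟩ := nonempty_interior_of_iUnion_of_closed hA hU
  rw [mem_interior_iff_mem_nhds, Metric.mem_nhds_iff] at hu0
  obtain ⟨δ, hδ, hb⟩ := hu0
  -- bound near zero
  have hAn : ∀ u ∈ A n, rbar ρ (Real.exp u) ≤ n := by
    intro u hu
    refine rbar_le hρ fun t ht => ?_
    have := hu (Real.log t)
    rwa [Real.exp_add, Real.exp_log ht] at this
  set M : ℝ := rbar ρ (Real.exp (-u0)) * n
  have hM : ∀ u, |u| < δ → rbar ρ (Real.exp u) ≤ M := by
    intro u hu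
    have h1 : u0 + u ∈ A n := hb (by simpa [Real.dist_eq] using hu)
    have h2 := hAn _ h1
    have : Real.exp u = Real.exp (-u0) * Real.exp (u0 + u) := by
      rw [← Real.exp_add]; congr 1; ring
    rw [this]
    exact (rbar_mul_le hρ (Real.exp_pos _) (Real.exp_pos _)).trans
      (mul_le_mul_of_nonneg_left h2 (rbar_pos hρ (Real.exp_pos _)).le)
  have hM0 : 0 ≤ M := (rbar_pos hρ (Real.exp_pos 0)).le.trans (hM 0 (by simpa using hδ))
  have hpow : ∀ (k : ℕ) u, |u| < δ → rbar ρ (Real.exp ((k + 1 : ℕ) * u)) ≤ M ^ (k + 1) := by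
    intro k u hu
    induction k with
    | zero => simpa using hM u hu
    | succ k ih =>
      have : Real.exp (((k + 1 + 1 : ℕ) : ℝ) * u) =
          Real.exp ((k + 1 : ℕ) * u) * Real.exp u := by
        rw [← Real.exp_add]; congr 1; push_cast; ring
      rw [this, pow_succ]
      exact (rbar_mul_le hρ (Real.exp_pos _) (Real.exp_pos _)).trans
        (mul_le_mul ih (hM u hu) (rbar_pos hρ (Real.exp_pos _)).le (by positivity))
  obtain ⟨k, hk⟩ := exists_nat_gt (Real.log 2 / δ)
  refine ⟨M ^ (k + 1) + 1, by positivity, fun s hs1 hs2 => ?_⟩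
  have hs : 0 < s := by linarith
  have hk0 : (0 : ℝ) < (k + 1 : ℕ) := by positivity
  have := hpow k (Real.log s / (k + 1 : ℕ)) (by
    rw [abs_div, abs_of_pos hk0, div_lt_iff₀ hk0, abs_of_nonpos (Real.log_nonpos hs.le hs2)]
    have h3 : Real.log (1 / 2) ≤ Real.log s := Real.log_le_log (by norm_num) hs1
    rw [one_div, Real.log_inv] at h3
    rw [div_lt_iff₀ hδ] at hk
    push_cast
    nlinarith)
  rw [mul_div_cancel₀ _ hk0.ne', Real.exp_log hs] at this
  linarith

/-- discretised weight -/
noncomputable def wt (ρ : ℝ → ℝ) (i : ℤ) : ℝ≥0∞ :=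
  ENNReal.ofReal (min 1 ((2 : ℝ) ^ i)⁻¹ * rbar ρ ((2 : ℝ) ^ i))

lemma wt_summable (hρ : IsClassBpm ρ) : ∑' i, wt ρ i ≠ ∞ := by
  obtain ⟨C, hC, hCb⟩ := rbar_locBdd hρ.toIsClassB
  set f : ℝ → ℝ := fun t => min 1 t⁻¹ * rbar ρ t * t⁻¹
  have hint : ∫⁻ t in Ioi 0, ENNReal.ofReal (f t) ≠ ∞ := by
    have := hρ.integ.lintegral_lt_top
    exact this.ne
  let S : ℤ → Set ℝ := fun i => Ioc ((2 : ℝ) ^ i) ((2 : ℝ) ^ (i + 1))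
  have hdisj : Pairwise (Function.onFun Disjoint S) := by
    intro i j hij
    wlog h : i < j generalizing i j
    · exact (this hij.symm (by omega)).symm
    refine Set.disjoint_left.2 fun x hx hx' => ?_
    have : (2 : ℝ) ^ (i + 1) ≤ 2 ^ j := zpow_le_zpow_right₀ (by norm_num) (by omega)
    exact absurd (hx.2.trans this) (not_le.2 hx'.1)
  have hle : ∑' i, ∫⁻ t in S i, ENNReal.ofReal (f t) ≤ ∫⁻ t in Ioi 0, ENNReal.ofReal (f t) := by
    rw [← lintegral_iUnion (fun i => measurableSet_Ioc) hdisj]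
    refine lintegral_mono_set (iUnion_subset fun i x hx => ?_)
    exact lt_trans (by positivity) hx.1
  have hlow : ∀ i, wt ρ i ≤ ENNReal.ofReal (4 * C) * ∫⁻ t in S i, ENNReal.ofReal (f t) := by
    intro i
    have h2 : (0 : ℝ) < 2 ^ i := by positivity
    set c : ℝ := (min 1 ((2 : ℝ) ^ i)⁻¹ * rbar ρ ((2 : ℝ) ^ i)) with hc
    have hc0 : 0 ≤ c := mul_nonneg (by positivity) (rbar_pos hρ.toIsClassB h2).le
    have hpt : ∀ t ∈ S i, ENNReal.ofReal (c / (4 * C) * ((2 : ℝ) ^ i)⁻¹) ≤ ENNReal.ofReal (f t) := by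
      intro t ht
      refine ENNReal.ofReal_le_ofReal ?_
      obtain ⟨h3, h4⟩ := ht
      rw [zpow_add₀ (by norm_num), zpow_one] at h4
      have ht0 : 0 < t := h2.trans h3
      have hinv : ((2 : ℝ) ^ i)⁻¹ / 2 ≤ t⁻¹ := by
        rw [← one_div, div_div, ← one_div]
        exact one_div_le_one_div_of_le ht0 h4
      have hmin : min 1 ((2 : ℝ) ^ i)⁻¹ / 2 ≤ min 1 t⁻¹ := by
        refine le_min ?_ ?_
        · linarith [min_le_left 1 ((2 : ℝ) ^ i)⁻¹]
        · linarith [min_le_right 1 ((2 : ℝ) ^ i)⁻¹]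
      have hr : rbar ρ ((2 : ℝ) ^ i) / C ≤ rbar ρ t := by
        rw [div_le_iff₀ hC]
        have h5 := rbar_mul_le hρ.toIsClassB (s := 2 ^ i / t) (t := t) (by positivity) ht0
        rw [div_mul_cancel₀ _ ht0.ne'] at h5
        refine h5.trans ?_
        rw [mul_comm]
        refine mul_le_mul_of_nonneg_left (hCb _ ?_ ?_) (rbar_pos hρ.toIsClassB ht0).le
        · rw [div_le_div_iff₀ (by norm_num) ht0]; linarith
        · rw [div_le_one ht0]; exact h3.le
      have hrb := (rbar_pos hρ.toIsClassB h2)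
      calc c / (4 * C) * ((2 : ℝ) ^ i)⁻¹ = (min 1 ((2 : ℝ) ^ i)⁻¹ / 2) *
            (rbar ρ ((2 : ℝ) ^ i) / C) * (((2 : ℝ) ^ i)⁻¹ / 2) := by rw [hc]; field_simp; norm_num
        _ ≤ f t := by
            refine mul_le_mul (mul_le_mul hmin hr (by positivity) (by positivity)) hinv
              (by positivity) (mul_nonneg (by positivity) (rbar_pos hρ.toIsClassB ht0).le)
    have h6 := setLIntegral_mono' (μ := volume) measurableSet_Ioc hpt
    rw [setLIntegral_const, Real.volume_Ioc, ← ENNReal.ofReal_mul (by positivity)] at h6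
    refine le_trans ?_ (mul_le_mul_right h6 _)
    rw [← ENNReal.ofReal_mul (by positivity)]
    refine ENNReal.ofReal_le_ofReal (le_of_eq ?_)
    rw [zpow_add₀ (by norm_num), zpow_one]
    rw [← hc]; field_simp; norm_num
  refine ne_top_of_le_ne_top ?_ (ENNReal.tsum_le_tsum hlow)
  rw [ENNReal.tsum_mul_left]
  exact ENNReal.mul_ne_top ENNReal.ofReal_ne_top (ne_top_of_le_ne_top hint hle)

lemma exists_finset_tail {f : ℤ → ℝ≥0∞} (hf : ∑' i, f i ≠ ∞) {ε : ℝ≥0∞} (hε : 0 < ε) :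
    ∃ F : Finset ℤ, ∑' i, (if i ∈ F then 0 else f i) < ε := by
  have h := (ENNReal.tendsto_tsum_compl_atTop_zero hf).eventually (gt_mem_nhds hε)
  obtain ⟨F, hF⟩ := h.exists
  refine ⟨F, lt_of_le_of_lt (le_of_eq ?_) hF⟩
  refine Eq.trans ?_ (tsum_subtype {x | x ∉ F} f).symm
  refine tsum_congr fun i => ?_
  by_cases hi : i ∈ F <;> simp [hi]

/-- kernel smallness -/
lemma kernel_small {g : ℤ → ℝ≥0∞} (hg : ∑' i, g i ≠ ∞) (v : ℤ → ℝ) {η : ℝ≥0∞} (hη : 0 < η) :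
    ∃ ε : ℝ, 0 < ε ∧ ∑' i, min (g i) (ENNReal.ofReal (ε * v i)) ≤ η := by
  obtain ⟨F, hF⟩ := exists_finset_tail hg (ENNReal.half_pos hη.ne')
  have ht : Tendsto (fun ε : ℝ => ∑ i ∈ F, ENNReal.ofReal (ε * v i)) (nhdsWithin 0 (Ioi 0))
      (nhds 0) := by
    have : Tendsto (fun ε : ℝ => ∑ i ∈ F, ENNReal.ofReal (ε * v i)) (nhds 0)
      (nhds (∑ i ∈ F, ENNReal.ofReal (0 * v i))) := by
      refine tendsto_finsetSum _ fun i _ => ?_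
      exact (ENNReal.continuous_ofReal.tendsto _).comp (tendsto_id.mul_const _)
    simp only [zero_mul, ENNReal.ofReal_zero, Finset.sum_const_zero] at this
    exact this.mono_left nhdsWithin_le_nhds
  have h2 := ht.eventually (gt_mem_nhds (ENNReal.half_pos hη.ne'))
  obtain ⟨ε, h3, h4⟩ := (h2.and self_mem_nhdsWithin).exists
  refine ⟨ε, h4, ?_⟩
  calc ∑' i, min (g i) (ENNReal.ofReal (ε * v i)) ≤
      ∑' i, ((if i ∈ F then 0 else g i) + (if i ∈ F then ENNReal.ofReal (ε * v i) else 0)) := by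
        refine ENNReal.tsum_le_tsum fun i => ?_
        by_cases hi : i ∈ F <;> simp [hi]
    _ = ∑' i, (if i ∈ F then 0 else g i) + ∑ i ∈ F, ENNReal.ofReal (ε * v i) := by
        rw [ENNReal.tsum_add]
        congr 1
        rw [tsum_eq_sum (s := F)]
        · exact Finset.sum_congr rfl fun i hi => by simp [hi]
        · intro i hi; simp [hi]
    _ ≤ η / 2 + η / 2 := add_le_add hF.le h3.le
    _ = η := ENNReal.add_halves η

end rb


section K
variable {E₀ E₁ V : Type*} [NormedAddCommGroup E₀] [NormedSpace ℝ E₀]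
  [NormedAddCommGroup E₁] [NormedSpace ℝ E₁] [AddCommGroup V] [Module ℝ V]
  (i₀ : E₀ →ₗ[ℝ] V) (i₁ : E₁ →ₗ[ℝ] V)

variable {i₀ i₁} in
lemma eKfun_lt_iff {t : ℝ} {x : V} {c : ℝ≥0∞} : eKfun i₀ i₁ t x < c ↔
    ∃ (a : E₀) (b : E₁), x = i₀ a + i₁ b ∧ ENNReal.ofReal (‖a‖ + t * ‖b‖) < c := by
  simp only [eKfun, iInf_lt_iff]
  simp only [exists_prop]

lemma eKfun_le (t : ℝ) (a : E₀) (b : E₁) :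
    eKfun i₀ i₁ t (i₀ a + i₁ b) ≤ ENNReal.ofReal (‖a‖ + t * ‖b‖) := by
  unfold eKfun
  exact iInf₂_le_of_le a b (iInf_le _ rfl)

variable {i₀ i₁} in
lemma le_of_eKfun_le {t : ℝ} {x : V} {c d : ℝ≥0∞}
    (h : ∀ (a : E₀) (b : E₁), x = i₀ a + i₁ b → d ≤ ENNReal.ofReal (‖a‖ + t * ‖b‖) + c) :
    d ≤ eKfun i₀ i₁ t x + c := by
  refine le_of_forall_gt fun e he => ?_
  by_cases hc : c = ∞
  · simp [hc] at he
  have h1 : eKfun i₀ i₁ t x < e - c := lt_tsub_iff_right.2 he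
  obtain ⟨a, b, hx, hlt⟩ := eKfun_lt_iff.1 h1
  exact (h a b hx).trans_lt (lt_tsub_iff_right.1 hlt)

lemma eKfun_add_le {t : ℝ} (ht : 0 ≤ t) (x y : V) :
    eKfun i₀ i₁ t (x + y) ≤ eKfun i₀ i₁ t x + eKfun i₀ i₁ t y := by
  refine le_of_eKfun_le fun a b hx => ?_
  rw [add_comm (ENNReal.ofReal _)]
  refine le_of_eKfun_le fun a' b' hy => ?_
  have : x + y = i₀ (a' + a) + i₁ (b' + b) := by rw [hx, hy, map_add, map_add]; abel
  rw [this, ← ENNReal.ofReal_add (by positivity) (by positivity)]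
  refine (eKfun_le _ _ _ _ _).trans (ENNReal.ofReal_le_ofReal ?_)
  have h1 := norm_add_le a' a
  have h2 := mul_le_mul_of_nonneg_left (norm_add_le b' b) ht
  linarith

lemma eKfun_zero (t : ℝ) : eKfun i₀ i₁ t (0 : V) = 0 := by
  have := eKfun_le i₀ i₁ t 0 0
  simpa using this

lemma eKfun_smul_le (t : ℝ) (c : ℝ) (x : V) :
    eKfun i₀ i₁ t (c • x) ≤ ENNReal.ofReal |c| * eKfun i₀ i₁ t x := by
  by_cases hc : c = 0
  · simp [hc, eKfun_zero]
  have hc' : ENNReal.ofReal |c| ≠ 0 := by simpa using hc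
  rw [mul_comm, ← ENNReal.div_le_iff hc' ENNReal.ofReal_ne_top]
  have := le_of_eKfun_le (i₀ := i₀) (i₁ := i₁) (t := t) (x := x) (c := 0)
    (d := eKfun i₀ i₁ t (c • x) / ENNReal.ofReal |c|) (fun a b hx => by
      rw [ENNReal.div_le_iff hc' ENNReal.ofReal_ne_top, hx, add_zero, smul_add, ← map_smul,
        ← map_smul]
      refine (eKfun_le _ _ _ _ _).trans ?_
      rw [mul_comm (ENNReal.ofReal _), ← ENNReal.ofReal_mul (abs_nonneg _), norm_smul, norm_smul, Real.norm_eq_abs]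
      refine ENNReal.ofReal_le_ofReal (le_of_eq (by ring)))
  simpa using this

lemma eKfun_neg_le (t : ℝ) (x : V) : eKfun i₀ i₁ t (-x) ≤ eKfun i₀ i₁ t x := by
  have := eKfun_smul_le i₀ i₁ t (-1) x
  simpa using this

lemma eKfun_sub_le {t : ℝ} (ht : 0 ≤ t) (x y : V) :
    eKfun i₀ i₁ t (x - y) ≤ eKfun i₀ i₁ t x + eKfun i₀ i₁ t y := by
  rw [sub_eq_add_neg]
  exact (eKfun_add_le _ _ ht _ _).trans (add_le_add_right (eKfun_neg_le _ _ _ _) _)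

lemma eKfun_sum_le {ι : Type*} {t : ℝ} (ht : 0 ≤ t) (s : Finset ι) (f : ι → V) :
    eKfun i₀ i₁ t (∑ i ∈ s, f i) ≤ ∑ i ∈ s, eKfun i₀ i₁ t (f i) := by
  classical
  induction s using Finset.induction with
  | empty => simp [eKfun_zero]
  | insert i s hi ih =>
    rw [Finset.sum_insert hi, Finset.sum_insert hi]
    exact (eKfun_add_le _ _ ht _ _).trans (add_le_add_right ih _)

lemma eKfun_le_left (t : ℝ) (a : E₀) : eKfun i₀ i₁ t (i₀ a) ≤ ENNReal.ofReal ‖a‖ := by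
  have := eKfun_le i₀ i₁ t a 0
  simpa using this

lemma eKfun_le_right (t : ℝ) (b : E₁) : eKfun i₀ i₁ t (i₁ b) ≤ ENNReal.ofReal (t * ‖b‖) := by
  have := eKfun_le i₀ i₁ t 0 b
  simpa using this

lemma enormOf_lt_iff {E : Type*} [NormedAddCommGroup E] [NormedSpace ℝ E] {i : E →ₗ[ℝ] V} {x : V}
    {c : ℝ≥0∞} : enormOf i x < c ↔ ∃ a, i a = x ∧ ENNReal.ofReal ‖a‖ < c := by
  simp only [enormOf, iInf_lt_iff, exists_prop]
  simp only [ofReal_norm, enorm_eq_nnnorm]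

lemma enormOf_le {E : Type*} [NormedAddCommGroup E] [NormedSpace ℝ E] (i : E →ₗ[ℝ] V) (a : E) :
    enormOf i (i a) ≤ ENNReal.ofReal ‖a‖ := by
  unfold enormOf
  refine iInf₂_le_of_le a rfl ?_
  rw [← enorm_eq_nnnorm, ofReal_norm]

lemma eKfun_le_enorm₀ (t : ℝ) (x : V) : eKfun i₀ i₁ t x ≤ enormOf i₀ x := by
  refine le_of_forall_gt fun c hc => ?_
  obtain ⟨a, rfl, h⟩ := enormOf_lt_iff.1 hc
  exact (eKfun_le_left _ _ _ _).trans_lt h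

lemma eKfun_le_enorm₁ {t : ℝ} (ht : 0 < t) (x : V) :
    eKfun i₀ i₁ t x ≤ ENNReal.ofReal t * enormOf i₁ x := by
  have ht' : ENNReal.ofReal t ≠ 0 := by simpa using ht
  rw [mul_comm, ← ENNReal.div_le_iff ht' ENNReal.ofReal_ne_top]
  refine le_of_forall_gt fun c hc => ?_
  obtain ⟨a, rfl, h⟩ := enormOf_lt_iff.1 hc
  refine lt_of_le_of_lt ?_ h
  rw [ENNReal.div_le_iff ht' ENNReal.ofReal_ne_top, mul_comm, ← ENNReal.ofReal_mul ht.le]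
  exact eKfun_le_right _ _ _ _

/-- comparison of `K`-functionals -/
lemma eKfun_compare {s t : ℝ} (hs : 0 < s) (ht : 0 < t) (x : V) :
    eKfun i₀ i₁ t x ≤ ENNReal.ofReal (max 1 (t / s)) * eKfun i₀ i₁ s x := by
  have h0 : 0 < max 1 (t / s) := by positivity
  have h0' : ENNReal.ofReal (max 1 (t / s)) ≠ 0 := by simp
  rw [mul_comm, ← ENNReal.div_le_iff h0' ENNReal.ofReal_ne_top]
  have := le_of_eKfun_le (i₀ := i₀) (i₁ := i₁) (t := s) (x := x) (c := 0)
    (d := eKfun i₀ i₁ t x / ENNReal.ofReal (max 1 (t / s))) (fun a b hx => by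
      rw [ENNReal.div_le_iff h0' ENNReal.ofReal_ne_top, hx, add_zero]
      refine (eKfun_le _ _ _ _ _).trans ?_
      rw [mul_comm (ENNReal.ofReal _), ← ENNReal.ofReal_mul h0.le]
      refine ENNReal.ofReal_le_ofReal ?_
      have h1 : 1 * ‖a‖ ≤ max 1 (t / s) * ‖a‖ :=
        mul_le_mul_of_nonneg_right (le_max_left _ _) (norm_nonneg _)
      have h2 : t / s * (s * ‖b‖) ≤ max 1 (t / s) * (s * ‖b‖) :=
        mul_le_mul_of_nonneg_right (le_max_right _ _) (by positivity)
      have h3 : t / s * (s * ‖b‖) = t * ‖b‖ := by field_simp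
      nlinarith)
  simpa using this

lemma eKfun_min_le {k : ℝ} (hk : 0 < k) {t : ℝ} (ht : 0 < t) {a : E₀} {b : E₁} (h : i₀ a = i₁ b) :
    eKfun i₀ i₁ t (i₀ a) ≤ ENNReal.ofReal (min 1 (t / k) * max ‖a‖ (k * ‖b‖)) := by
  have hm : 0 ≤ max ‖a‖ (k * ‖b‖) := le_max_of_le_left (norm_nonneg _)
  rcases le_total 1 (t / k) with h1 | h1
  · rw [min_eq_left h1, one_mul]
    exact (eKfun_le_left _ _ _ _).trans (ENNReal.ofReal_le_ofReal (le_max_left _ _))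
  · rw [min_eq_right h1, h]
    refine (eKfun_le_right _ _ _ _).trans (ENNReal.ofReal_le_ofReal ?_)
    have h2 : t / k * (k * ‖b‖) ≤ t / k * max ‖a‖ (k * ‖b‖) :=
      mul_le_mul_of_nonneg_left (le_max_right _ _) (by positivity)
    have h3 : t / k * (k * ‖b‖) = t * ‖b‖ := by field_simp
    linarith

end K


lemma eLq_shift (r : ℝ≥0∞) (e : ℤ → ℝ≥0∞) : eLq r (fun n => e (n - 1)) = eLq r e := by
  unfold eLq
  split_ifs
  · exact (Equiv.subRight (1 : ℤ)).iSup_comp (g := e)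
  · rw [← (Equiv.subRight (1 : ℤ)).tsum_eq (fun n => e n ^ r.toReal)]
    rfl

lemma telescope {V : Type*} [AddCommGroup V] (f : ℤ → V) (N : ℕ) :
    ∑ n ∈ Finset.Ioc (-(N : ℤ)) N, (f n - f (n - 1)) = f N - f (-N) := by
  induction N with
  | zero => simp
  | succ N ih =>
    have h : Finset.Ioc (-((N + 1 : ℕ) : ℤ)) ((N + 1 : ℕ) : ℤ) =
        insert ((N : ℤ) + 1) (insert (-(N : ℤ)) (Finset.Ioc (-(N : ℤ)) N)) := by
      ext x; simp only [Finset.mem_Ioc, Finset.mem_insert]; push_cast; omega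
    rw [h, Finset.sum_insert, Finset.sum_insert, ih]
    · push_cast
      rw [show (N : ℤ) + 1 - 1 = N by ring, show -(N : ℤ) - 1 = -(N + 1) by ring]
      rw [show -((N : ℤ) + 1) = -1 + -N by ring]
      abel
    · simp
    · simp only [Finset.mem_insert, Finset.mem_Ioc]; omega

section
variable {E₀ E₁ V : Type*} [NormedAddCommGroup E₀] [NormedSpace ℝ E₀]
  [NormedAddCommGroup E₁] [NormedSpace ℝ E₁] [AddCommGroup V] [Module ℝ V]
  {i₀ : E₀ →ₗ[ℝ] V} {i₁ : E₁ →ₗ[ℝ] V}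

lemma eq_zero_of_eKfun [TopologicalSpace V] (hG : IsBanachCouple i₀ i₁) {t : ℝ} (ht : 0 < t) {z : V}
    (h : eKfun i₀ i₁ t z = 0) : z = 0 := by
  have hh : ∀ n : ℕ, ∃ (a : E₀) (b : E₁), z = i₀ a + i₁ b ∧
      ‖a‖ + t * ‖b‖ < 1 / ((n : ℝ) + 1) := by
    intro n
    have hn : (0 : ℝ) < 1 / ((n : ℝ) + 1) := by positivity
    obtain ⟨a, b, h1, h2⟩ := eKfun_lt_iff.1 (show eKfun i₀ i₁ t z <
      ENNReal.ofReal (1 / ((n : ℝ) + 1)) by rw [h]; simpa using hn)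
    exact ⟨a, b, h1, (ENNReal.ofReal_lt_ofReal_iff hn).1 h2⟩
  choose a b h1 h2 using hh
  have ha : Tendsto a atTop (nhds 0) := by
    refine squeeze_zero_norm (fun n => ?_) tendsto_one_div_add_atTop_nhds_zero_nat
    have : 0 ≤ t * ‖b n‖ := by positivity
    linarith [h2 n]
  have hb : Tendsto b atTop (nhds 0) := by
    have h3 : Tendsto (fun n : ℕ => t⁻¹ * (1 / ((n : ℝ) + 1))) atTop (nhds 0) := by
      simpa using tendsto_one_div_add_atTop_nhds_zero_nat.const_mul t⁻¹
    refine squeeze_zero_norm (fun n => ?_) h3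
    have := h2 n
    rw [← div_eq_inv_mul, le_div_iff₀ ht]
    linarith [norm_nonneg (a n)]
  have := hG.t2
  have := hG.contAdd
  have h4 : Tendsto (fun n => i₀ (a n) + i₁ (b n)) atTop (nhds (i₀ 0 + i₁ 0)) :=
    ((hG.cont₀.tendsto 0).comp ha).add ((hG.cont₁.tendsto 0).comp hb)
  simp only [← h1, map_zero, add_zero] at h4
  exact tendsto_nhds_unique tendsto_const_nhds h4

lemma eJNorm_zero {ρ : ℝ → ℝ} {r : ℝ≥0∞} (hr : 1 ≤ r) : eJNorm i₀ i₁ ρ r (0 : V) = 0 := by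
  refine le_antisymm ?_ zero_le
  unfold eJNorm
  refine iInf_le_of_le 0 (iInf_le_of_le 0 (iInf_le_of_le ⟨by simp, fun ε hε => ⟨∅, fun G _ => ?_⟩⟩ ?_))
  · simp only [esumNorm, Pi.zero_apply, map_zero, Finset.sum_const_zero, sub_zero, eKfun_zero]
    simpa using hε
  · have := eLq_const_mul hr 0 (fun _ => 0)
    simpa using this

lemma eJ_le_eK [TopologicalSpace V] (hG : IsBanachCouple i₀ i₁) {ρ : ℝ → ℝ} (hρ : IsClassBpm ρ)
    {r : ℝ≥0∞} (hr : 1 ≤ r) : ∃ C : ℝ≥0∞, C ≠ ∞ ∧ ∀ z, eKNorm i₀ i₁ ρ r z ≠ ∞ →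
      eJNorm i₀ i₁ ρ r z ≤ C * eKNorm i₀ i₁ ρ r z := by
  set R : ℝ≥0∞ := ENNReal.ofReal (rbar ρ (1 / 2))
  have hC : (2 + 4 * R) ≠ ∞ := ENNReal.add_ne_top.2 ⟨by simp, ENNReal.mul_ne_top (by simp) (by simp [R])⟩
  refine ⟨2 + 4 * R, hC, fun z hz => ?_⟩
  by_cases hz0 : z = 0
  · rw [hz0, eJNorm_zero hr]; exact zero_le
  have h2 : ∀ n : ℤ, (0 : ℝ) < 2 ^ n := fun n => by positivity
  have hρn : ∀ n : ℤ, 0 < ρ (2 ^ n) := fun n => hρ.pos _ (h2 n)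
  set K : ℤ → ℝ≥0∞ := fun n => eKfun i₀ i₁ (2 ^ n) z with hK
  set e : ℤ → ℝ≥0∞ := fun n => K n / ENNReal.ofReal (ρ (2 ^ n)) with he
  set L := eKNorm i₀ i₁ ρ r z with hL
  have hLe : L = eLq r e := rfl
  have hρ0 : ∀ n : ℤ, ENNReal.ofReal (ρ (2 ^ n)) ≠ 0 := fun n => by simpa using hρn n
  have hKe : ∀ n, K n = e n * ENNReal.ofReal (ρ (2 ^ n)) := fun n => by
    rw [he]; exact (ENNReal.div_mul_cancel (hρ0 n) ENNReal.ofReal_ne_top).symm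
  have heL : ∀ n, e n ≤ L := fun n => hLe ▸ le_eLq hr e n
  have hKtop : ∀ n, K n ≠ ∞ := fun n => by
    rw [hKe]; exact ENNReal.mul_ne_top (ne_top_of_le_ne_top hz (heL n)) ENNReal.ofReal_ne_top
  have hK0 : ∀ n, K n ≠ 0 := fun n h => hz0 (eq_zero_of_eKfun hG (h2 n) h)
  have hch : ∀ n : ℤ, ∃ (a : E₀) (b : E₁), z = i₀ a + i₁ b ∧
      ENNReal.ofReal (‖a‖ + 2 ^ n * ‖b‖) ≤ 2 * K n := by
    intro n
    have hlt : K n < 2 * K n := by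
      rw [two_mul]; exact ENNReal.lt_add_right (hKtop n) (hK0 n)
    obtain ⟨a, b, h3, h4⟩ := eKfun_lt_iff.1 hlt
    exact ⟨a, b, h3, h4.le⟩
  choose a b hab hle using hch
  have hbn : ∀ n : ℤ, 0 ≤ (2 : ℝ) ^ n * ‖b n‖ := fun n => by positivity
  set a' : ℤ → E₀ := fun n => a n - a (n - 1) with ha'
  set b' : ℤ → E₁ := fun n => b (n - 1) - b n with hb'
  have hrep : ∀ n, i₀ (a' n) = i₁ (b' n) := by
    intro n
    simp only [ha', hb', map_sub]
    have := (hab n).symm.trans (hab (n - 1))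
    rw [sub_eq_sub_iff_add_eq_add, this, add_comm]
  set J : ℤ → ℝ := fun n => max ‖a' n‖ (2 ^ n * ‖b' n‖) with hJ
  have hJ0 : ∀ n, 0 ≤ J n := fun n => le_max_of_le_left (norm_nonneg _)
  have hJle : ∀ n, ENNReal.ofReal (J n) ≤ 2 * K n + 4 * K (n - 1) := by
    intro n
    have h3 : J n ≤ (‖a n‖ + 2 ^ n * ‖b n‖) + 2 * (‖a (n - 1)‖ + 2 ^ (n - 1) * ‖b (n - 1)‖) := by
      refine max_le ?_ ?_
      · have := norm_sub_le (a n) (a (n - 1))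
        have h4 := hbn n
        have h5 := hbn (n - 1)
        have h6 := norm_nonneg (a (n - 1))
        simp only [ha']; linarith
      · have := mul_le_mul_of_nonneg_left (norm_sub_le (b (n - 1)) (b n)) (h2 n).le
        have h7 : (2 : ℝ) ^ n = 2 * 2 ^ (n - 1) := by
          rw [zpow_sub_one₀ (by norm_num)]; field_simp
        have h6 := norm_nonneg (a (n - 1))
        have h8 := norm_nonneg (a n)
        have h9 : (2 : ℝ) ^ n * ‖b (n - 1)‖ = 2 * (2 ^ (n - 1) * ‖b (n - 1)‖) := by rw [h7]; ring
        simp only [hb']; linarith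
    refine (ENNReal.ofReal_le_ofReal h3).trans ?_
    rw [ENNReal.ofReal_add (by have := hbn n; positivity) (by have := hbn (n - 1); positivity),
      ENNReal.ofReal_mul (by norm_num)]
    refine add_le_add (hle n) ?_
    refine (mul_le_mul_right (hle (n - 1)) _).trans (le_of_eq ?_)
    rw [← mul_assoc]; norm_num
  set d : ℤ → ℝ≥0∞ := fun n => ENNReal.ofReal (J n / ρ (2 ^ n)) with hd
  have hde : ∀ n, d n ≤ 2 * e n + 4 * R * e (n - 1) := by
    intro n
    rw [hd]; simp only
    rw [ENNReal.ofReal_div_of_pos (hρn n), ENNReal.div_le_iff (hρ0 n) ENNReal.ofReal_ne_top]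
    refine (hJle n).trans ?_
    rw [hKe n, hKe (n - 1), add_mul, ← mul_assoc]
    refine add_le_add_right ?_ _
    have h3 : ENNReal.ofReal (ρ (2 ^ (n - 1))) ≤ R * ENNReal.ofReal (ρ (2 ^ n)) := by
      rw [← ENNReal.ofReal_mul (rbar_pos hρ.toIsClassB (by norm_num)).le]
      refine ENNReal.ofReal_le_ofReal ?_
      have := rho_mul_le hρ.toIsClassB (s := 1 / 2) (by norm_num) (h2 n)
      rwa [show (1 / 2 : ℝ) * 2 ^ n = 2 ^ (n - 1) by
        rw [zpow_sub_one₀ (by norm_num)]; ring] at this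
    calc 4 * (e (n - 1) * ENNReal.ofReal (ρ (2 ^ (n - 1)))) ≤
        4 * (e (n - 1) * (R * ENNReal.ofReal (ρ (2 ^ n)))) := by gcongr
      _ = _ := by ring
  have hdD : eLq r d ≤ (2 + 4 * R) * L := by
    refine (eLq_mono r hde).trans ((eLq_add_le hr _ _).trans (le_of_eq ?_))
    rw [eLq_const_mul hr, eLq_const_mul hr, eLq_shift, ← hLe, add_mul]
  set D := (2 + 4 * R) * L with hD
  have hDtop : D ≠ ∞ := ENNReal.mul_ne_top hC hz
  have hdn : ∀ n, d n ≤ D := fun n => (le_eLq hr d n).trans hdD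
  have hmin0 : ∀ n : ℤ, 0 ≤ min 1 ((2 : ℝ) ^ n)⁻¹ := fun n => by positivity
  have hwt : ∀ n, ENNReal.ofReal (min 1 ((2 : ℝ) ^ n)⁻¹) * ENNReal.ofReal (ρ (2 ^ n)) ≤ wt ρ n := by
    intro n
    rw [← ENNReal.ofReal_mul (hmin0 n)]
    exact ENNReal.ofReal_le_ofReal
      (mul_le_mul_of_nonneg_left (rho_le_rbar hρ.toIsClassB (h2 n)) (hmin0 n))
  have hu : ∀ n, esumNorm i₀ i₁ (i₀ (a' n)) ≤ D * wt ρ n := by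
    intro n
    have h3 := eKfun_min_le i₀ i₁ (h2 n) one_pos (hrep n)
    rw [one_div, ENNReal.ofReal_mul (hmin0 n)] at h3
    have h4 : ENNReal.ofReal (J n) = d n * ENNReal.ofReal (ρ (2 ^ n)) := by
      rw [hd]; simp only
      rw [ENNReal.ofReal_div_of_pos (hρn n), ENNReal.div_mul_cancel (hρ0 n) ENNReal.ofReal_ne_top]
    refine h3.trans ?_
    change _ * ENNReal.ofReal (J n) ≤ _
    rw [h4, ← mul_assoc, mul_comm _ (d n), mul_assoc]
    exact mul_le_mul' (hdn n) (hwt n)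
  have hsum : ∑' n, D * wt ρ n ≠ ∞ := by
    rw [ENNReal.tsum_mul_left]; exact ENNReal.mul_ne_top hDtop (wt_summable hρ)
  have htend : Tendsto (fun n => 2 * L * wt ρ n) cofinite (nhds 0) := by
    refine ENNReal.tendsto_cofinite_zero_of_tsum_ne_top ?_
    rw [ENNReal.tsum_mul_left]
    exact ENNReal.mul_ne_top (ENNReal.mul_ne_top (by simp) hz) (wt_summable hρ)
  have hend0 : ∀ n : ℤ, n ≤ 0 → esumNorm i₀ i₁ (i₀ (a n)) ≤ 2 * L * wt ρ n := by
    intro n hn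
    have h3 : min 1 ((2 : ℝ) ^ n)⁻¹ = 1 := by
      refine min_eq_left ?_
      rw [← zpow_neg]
      exact one_le_zpow₀ (by norm_num) (by omega)
    have h4 := hwt n
    rw [h3, ENNReal.ofReal_one, one_mul] at h4
    refine (eKfun_le_left _ _ _ _).trans ?_
    refine (ENNReal.ofReal_le_ofReal (by linarith [hbn n])).trans ((hle n).trans ?_)
    rw [hKe, mul_assoc]
    gcongr
    exact heL n
  have hend1 : ∀ n : ℤ, 0 ≤ n → esumNorm i₀ i₁ (i₁ (b n)) ≤ 2 * L * wt ρ n := by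
    intro n hn
    have h3 : min 1 ((2 : ℝ) ^ n)⁻¹ = ((2 : ℝ) ^ n)⁻¹ := by
      refine min_eq_right ?_
      exact inv_le_one_of_one_le₀ (one_le_zpow₀ (by norm_num) hn)
    have h4 := hwt n
    rw [h3] at h4
    refine (eKfun_le_right _ _ _ _).trans ?_
    have h5 : 1 * ‖b n‖ ≤ ((2 : ℝ) ^ n)⁻¹ * (‖a n‖ + 2 ^ n * ‖b n‖) := by
      rw [mul_add, inv_mul_cancel_left₀ (h2 n).ne', one_mul]
      have : 0 ≤ ((2 : ℝ) ^ n)⁻¹ * ‖a n‖ := by positivity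
      linarith
    refine (ENNReal.ofReal_le_ofReal h5).trans ?_
    rw [ENNReal.ofReal_mul (by positivity)]
    calc _ ≤ ENNReal.ofReal ((2 : ℝ) ^ n)⁻¹ * (2 * (L * ENNReal.ofReal (ρ (2 ^ n)))) := by
          gcongr
          refine (hle n).trans ?_
          rw [hKe]; gcongr; exact heL n
      _ = 2 * L * (ENNReal.ofReal ((2 : ℝ) ^ n)⁻¹ * ENNReal.ofReal (ρ (2 ^ n))) := by ring
      _ ≤ _ := by gcongr
  have hJrep : IsJRep i₀ i₁ z a' b' := by
    refine ⟨hrep, fun ε hε => ?_⟩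
    have hε3 : 0 < ENNReal.ofReal ε / 3 := by
      refine ENNReal.div_pos (by simpa using hε) (by simp)
    obtain ⟨F, hF⟩ := exists_finset_tail hsum hε3
    have hev := htend.eventually (gt_mem_nhds hε3)
    have hp : Tendsto (fun N : ℕ => (N : ℤ)) atTop cofinite := by
      rw [← Nat.cofinite_eq_atTop]; exact Nat.cast_injective.tendsto_cofinite
    have hm : Tendsto (fun N : ℕ => -(N : ℤ)) atTop cofinite := by
      rw [← Nat.cofinite_eq_atTop]
      exact (neg_injective.comp Nat.cast_injective).tendsto_cofinite
    have hFN : ∀ᶠ N : ℕ in atTop, F ⊆ Finset.Ioc (-(N : ℤ)) N := by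
      have : ∀ᶠ N : ℕ in atTop, ∀ x ∈ F, x ∈ Finset.Ioc (-(N : ℤ)) N := by
        rw [Filter.eventually_all_finset]
        intro x _
        filter_upwards [eventually_gt_atTop x.natAbs] with N hN
        simp only [Finset.mem_Ioc]; omega
      exact this
    obtain ⟨N, h5, h6, h7⟩ := ((hp.eventually hev).and ((hm.eventually hev).and hFN)).exists
    refine ⟨Finset.Ioc (-(N : ℤ)) N, fun G hG' => ?_⟩
    have hsplit : z - ∑ n ∈ G, i₀ (a' n) = (i₁ (b N) + i₀ (a (-N))) -
        ∑ n ∈ G \ Finset.Ioc (-(N : ℤ)) N, i₀ (a' n) := by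
      rw [← Finset.sum_sdiff hG']
      have h8 : ∑ n ∈ Finset.Ioc (-(N : ℤ)) N, i₀ (a' n) = i₀ (a N) - i₀ (a (-N)) := by
        rw [← telescope (fun n => i₀ (a n)) N]
        exact Finset.sum_congr rfl fun n _ => by simp [ha']
      rw [h8]
      nth_rewrite 1 [hab N]
      abel
    rw [hsplit]
    have h9 : ∑ n ∈ G \ Finset.Ioc (-(N : ℤ)) N, esumNorm i₀ i₁ (i₀ (a' n)) <
        ENNReal.ofReal ε / 3 := by
      refine lt_of_le_of_lt ?_ hF
      refine le_trans (Finset.sum_le_sum fun n hn => ?_)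
        (ENNReal.sum_le_tsum (G \ Finset.Ioc (-(N : ℤ)) N))
      have : n ∉ F := fun h => (Finset.mem_sdiff.1 hn).2 (h7 h)
      simp only [this, if_false]
      exact hu n
    calc esumNorm i₀ i₁ ((i₁ (b N) + i₀ (a (-N))) -
        ∑ n ∈ G \ Finset.Ioc (-(N : ℤ)) N, i₀ (a' n))
        ≤ (esumNorm i₀ i₁ (i₁ (b N)) + esumNorm i₀ i₁ (i₀ (a (-N)))) +
          ∑ n ∈ G \ Finset.Ioc (-(N : ℤ)) N, esumNorm i₀ i₁ (i₀ (a' n)) := by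
          refine (eKfun_sub_le _ _ zero_le_one _ _).trans (add_le_add ?_ ?_)
          · exact eKfun_add_le _ _ zero_le_one _ _
          · exact eKfun_sum_le _ _ zero_le_one _ _
      _ < (ENNReal.ofReal ε / 3 + ENNReal.ofReal ε / 3) + ENNReal.ofReal ε / 3 := by
          refine ENNReal.add_lt_add (ENNReal.add_lt_add ?_ ?_) h9
          · exact (hend1 N (by omega)).trans_lt h5
          · exact (hend0 (-N) (by omega)).trans_lt h6
      _ = ENNReal.ofReal ε := ENNReal.add_thirds _
  refine le_trans ?_ hdD
  unfold eJNorm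
  exact iInf_le_of_le a' (iInf_le_of_le b' (iInf_le_of_le hJrep le_rfl))
end


lemma exists_small {c η : ℝ≥0∞} (hc : c ≠ ∞) (hη : 0 < η) :
    ∃ δ : ℝ, 0 < δ ∧ c * ENNReal.ofReal δ < η := by
  have h1 : Tendsto (fun δ : ℝ => c * ENNReal.ofReal δ) (nhdsWithin 0 (Ioi 0)) (nhds 0) := by
    have : Tendsto (fun δ : ℝ => c * ENNReal.ofReal δ) (nhds 0) (nhds (c * ENNReal.ofReal 0)) :=
      ENNReal.Tendsto.const_mul (ENNReal.continuous_ofReal.tendsto 0) (Or.inr hc)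
    simp only [ENNReal.ofReal_zero, mul_zero] at this
    exact this.mono_left nhdsWithin_le_nhds
  obtain ⟨δ, h2, h3⟩ := ((h1.eventually (gt_mem_nhds hη)).and self_mem_nhdsWithin).exists
  exact ⟨δ, h3, h2⟩

lemma net_inside {V ι : Type*} [AddCommGroup V] (N : V → ℝ≥0∞)
    (hN : ∀ x y z, N (x - y) ≤ N (x - z) + N (y - z)) (D : Finset V) (s : Set ι) (φ : ι → V)
    (δ : ℝ≥0∞) (h : ∀ i ∈ s, ∃ c ∈ D, N (φ i - c) < δ) :
    ∃ t : Finset ι, (∀ j ∈ t, j ∈ s) ∧ ∀ i ∈ s, ∃ j ∈ t, N (φ i - φ j) < δ + δ := by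
  classical
  by_cases hs : s.Nonempty
  swap
  · exact ⟨∅, by simp, fun i hi => absurd ⟨i, hi⟩ hs⟩
  obtain ⟨i0, hi0⟩ := hs
  have hch : ∀ c : V, ∃ j ∈ s, (∃ i ∈ s, N (φ i - c) < δ) → N (φ j - c) < δ := by
    intro c
    by_cases hc : ∃ i ∈ s, N (φ i - c) < δ
    · obtain ⟨i, hi, hlt⟩ := hc
      exact ⟨i, hi, fun _ => hlt⟩
    · exact ⟨i0, hi0, fun h => absurd h hc⟩
  choose j hj hj' using hch
  refine ⟨D.image j, ?_, fun i hi => ?_⟩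
  · intro k hk
    obtain ⟨c, _, rfl⟩ := Finset.mem_image.1 hk
    exact hj c
  · obtain ⟨c, hc, hlt⟩ := h i hi
    refine ⟨j c, Finset.mem_image_of_mem _ hc, ?_⟩
    exact (hN _ _ c).trans_lt (ENNReal.add_lt_add hlt (hj' c ⟨i, hi, hlt⟩))

section enorm
variable {E V : Type*} [NormedAddCommGroup E] [NormedSpace ℝ E] [AddCommGroup V] [Module ℝ V]

lemma enormOf_eq_eKfun (i : E →ₗ[ℝ] V) (x : V) : enormOf i x = eKfun i (0 : E →ₗ[ℝ] V) 1 x := by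
  refine le_antisymm ?_ (eKfun_le_enorm₀ _ _ _ _)
  refine le_of_forall_gt fun c hc => ?_
  obtain ⟨a, b, h1, h2⟩ := eKfun_lt_iff.1 hc
  refine enormOf_lt_iff.2 ⟨a, by simp [h1], lt_of_le_of_lt (ENNReal.ofReal_le_ofReal ?_) h2⟩
  linarith [norm_nonneg b]

lemma eKfun_sub_sub_le {E₀ E₁ : Type*} [NormedAddCommGroup E₀] [NormedSpace ℝ E₀]
    [NormedAddCommGroup E₁] [NormedSpace ℝ E₁] (i₀ : E₀ →ₗ[ℝ] V) (i₁ : E₁ →ₗ[ℝ] V)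
    {t : ℝ} (ht : 0 ≤ t) (x y z : V) :
    eKfun i₀ i₁ t (x - y) ≤ eKfun i₀ i₁ t (x - z) + eKfun i₀ i₁ t (y - z) := by
  have : x - y = (x - z) - (y - z) := by abel
  rw [this]; exact eKfun_sub_le _ _ ht _ _

lemma enormOf_sub_sub_le (i : E →ₗ[ℝ] V) (x y z : V) :
    enormOf i (x - y) ≤ enormOf i (x - z) + enormOf i (y - z) := by
  simp only [enormOf_eq_eKfun]
  exact eKfun_sub_sub_le _ _ zero_le_one _ _ _

end enorm

section bil
variable {E₀ E₁ F₀ F₁ G₀ G₁ VE VF VG : Type*}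
    [NormedAddCommGroup E₀] [NormedSpace ℝ E₀] [NormedAddCommGroup E₁] [NormedSpace ℝ E₁]
    [NormedAddCommGroup F₀] [NormedSpace ℝ F₀] [NormedAddCommGroup F₁] [NormedSpace ℝ F₁]
    [NormedAddCommGroup G₀] [NormedSpace ℝ G₀] [NormedAddCommGroup G₁] [NormedSpace ℝ G₁]
    [AddCommGroup VE] [Module ℝ VE]
    [AddCommGroup VF] [Module ℝ VF]
    [AddCommGroup VG] [Module ℝ VG]
    {iE₀ : E₀ →ₗ[ℝ] VE} {iE₁ : E₁ →ₗ[ℝ] VE}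
    {iF₀ : F₀ →ₗ[ℝ] VF} {iF₁ : F₁ →ₗ[ℝ] VF}
    {iG₀ : G₀ →ₗ[ℝ] VG} {iG₁ : G₁ →ₗ[ℝ] VG}
    {T : VE →ₗ[ℝ] VF →ₗ[ℝ] VG}

lemma bdd_real {E F G : Type*} [NormedAddCommGroup E] [NormedSpace ℝ E]
    [NormedAddCommGroup F] [NormedSpace ℝ F] [NormedAddCommGroup G] [NormedSpace ℝ G]
    {iE : E →ₗ[ℝ] VE} {iF : F →ₗ[ℝ] VF} {iG : G →ₗ[ℝ] VG}
    (hb : eBilBdd (enormOf iE) (enormOf iF) (enormOf iG) (fun x y => T x y)) :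
    ∃ M : ℝ, 0 ≤ M ∧ ∀ a a', enormOf iG (T (iE a) (iF a')) ≤ ENNReal.ofReal (M * ‖a‖ * ‖a'‖) := by
  obtain ⟨M, hM⟩ := hb
  refine ⟨M, M.2, fun a a' => (hM _ _).trans ?_⟩
  rw [ENNReal.ofReal_mul (by positivity), ENNReal.ofReal_mul (by positivity),
    ENNReal.ofReal_coe_nnreal]
  exact mul_le_mul' (mul_le_mul' le_rfl (enormOf_le _ _)) (enormOf_le _ _)

lemma esumNorm_ne_top {x : VE} {a : ℤ → E₀} {b : ℤ → E₁} (h : IsJRep iE₀ iE₁ x a b) :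
    esumNorm iE₀ iE₁ x ≠ ∞ := by
  obtain ⟨F, hF⟩ := h.2 1 one_pos
  have h1 := (hF F subset_rfl).ne_top
  have h2 : esumNorm iE₀ iE₁ (∑ n ∈ F, iE₀ (a n)) ≠ ∞ := by
    rw [← map_sum]
    exact ne_top_of_le_ne_top ENNReal.ofReal_ne_top (eKfun_le_left _ _ _ _)
  refine ne_top_of_le_ne_top (ENNReal.add_ne_top.2 ⟨h1, h2⟩) ?_
  have := eKfun_add_le iE₀ iE₁ zero_le_one (x - ∑ n ∈ F, iE₀ (a n)) (∑ n ∈ F, iE₀ (a n))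
  rwa [sub_add_cancel] at this

lemma approx (hbdd : eBilBdd (esumNorm iE₀ iE₁) (esumNorm iF₀ iF₁) (esumNorm iG₀ iG₁)
      (fun x y => T x y)) {x : VE} {a : ℤ → E₀} {b : ℤ → E₁} (hx : IsJRep iE₀ iE₁ x a b)
      {y : VF} {a' : ℤ → F₀} {b' : ℤ → F₁} (hy : IsJRep iF₀ iF₁ y a' b') {ε : ℝ≥0∞} (hε : 0 < ε) :
    ∃ G H : Finset ℤ, esumNorm iG₀ iG₁
      (T x y - ∑ p ∈ G ×ˢ H, T (iE₀ (a p.1)) (iF₀ (a' p.2))) < ε := by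
  obtain ⟨M, hM⟩ := hbdd
  have hε2 : 0 < ε / 2 := ENNReal.half_pos hε.ne'
  obtain ⟨δ, hδ, hlt⟩ := exists_small (c := M * esumNorm iF₀ iF₁ y)
    (ENNReal.mul_ne_top ENNReal.coe_ne_top (esumNorm_ne_top hy)) hε2
  obtain ⟨G, hG⟩ := hx.2 δ hδ
  set xG := ∑ n ∈ G, iE₀ (a n) with hxG
  have hxGt : esumNorm iE₀ iE₁ xG ≠ ∞ := by
    rw [hxG, ← map_sum]
    exact ne_top_of_le_ne_top ENNReal.ofReal_ne_top (eKfun_le_left _ _ _ _)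
  obtain ⟨δ', hδ', hlt'⟩ := exists_small (c := M * esumNorm iE₀ iE₁ xG)
    (ENNReal.mul_ne_top ENNReal.coe_ne_top hxGt) hε2
  obtain ⟨H, hH⟩ := hy.2 δ' hδ'
  set yH := ∑ n ∈ H, iF₀ (a' n) with hyH
  refine ⟨G, H, ?_⟩
  have hs : ∑ p ∈ G ×ˢ H, T (iE₀ (a p.1)) (iF₀ (a' p.2)) = T xG yH := by
    rw [Finset.sum_product, Finset.sum_comm, hyH, map_sum]
    refine Finset.sum_congr rfl fun k _ => ?_
    rw [hxG, map_sum, LinearMap.sum_apply]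
  have hd : T x y - T xG yH = T (x - xG) y + T xG (y - yH) := by
    simp only [map_sub, LinearMap.sub_apply]; abel
  rw [hs, hd]
  refine (eKfun_add_le _ _ zero_le_one _ _).trans_lt ?_
  rw [← ENNReal.add_halves ε]
  refine ENNReal.add_lt_add (lt_of_le_of_lt ?_ hlt) (lt_of_le_of_lt ?_ hlt')
  · refine (hM _ _).trans ?_
    rw [mul_right_comm]
    exact mul_le_mul' le_rfl (hG G subset_rfl).le
  · refine (hM _ _).trans ?_
    exact mul_le_mul' le_rfl (hH H subset_rfl).le

lemma eKfun_T_le (hbdd : eBilBdd (esumNorm iE₀ iE₁) (esumNorm iF₀ iF₁) (esumNorm iG₀ iG₁)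
      (fun x y => T x y)) {x : VE} {a : ℤ → E₀} {b : ℤ → E₁} (hx : IsJRep iE₀ iE₁ x a b)
      {y : VF} {a' : ℤ → F₀} {b' : ℤ → F₁} (hy : IsJRep iF₀ iF₁ y a' b') {t : ℝ} (ht : 0 < t) :
    eKfun iG₀ iG₁ t (T x y) ≤ ∑' k, ∑' m, eKfun iG₀ iG₁ t (T (iE₀ (a k)) (iF₀ (a' m))) := by
  refine ENNReal.le_of_forall_pos_le_add fun ε hε _ => ?_
  obtain ⟨δ, hδ, hlt⟩ := exists_small (c := ENNReal.ofReal (max 1 (t / 1))) ENNReal.ofReal_ne_top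
    (show (0 : ℝ≥0∞) < ε by simpa using hε)
  obtain ⟨G, H, hGH⟩ := approx (iG₀ := iG₀) (iG₁ := iG₁) hbdd hx hy
    (show 0 < ENNReal.ofReal δ by simpa using hδ)
  set z := ∑ p ∈ G ×ˢ H, T (iE₀ (a p.1)) (iF₀ (a' p.2)) with hz
  have h1 : eKfun iG₀ iG₁ t (T x y) ≤ eKfun iG₀ iG₁ t z + eKfun iG₀ iG₁ t (T x y - z) := by
    have := eKfun_add_le iG₀ iG₁ ht.le z (T x y - z)
    rwa [add_sub_cancel] at this
  refine h1.trans (add_le_add ?_ ?_)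
  · refine (eKfun_sum_le _ _ ht.le _ _).trans ?_
    rw [← ENNReal.tsum_prod]
    exact ENNReal.sum_le_tsum (f := fun p : ℤ × ℤ =>
      eKfun iG₀ iG₁ t (T (iE₀ (a p.1)) (iF₀ (a' p.2)))) _
  · refine (eKfun_compare _ _ one_pos ht _).trans (le_trans ?_ hlt.le)
    exact mul_le_mul' le_rfl hGH.le

/-- The convolution kernel size. -/
noncomputable def kerSize (ρ : ℝ → ℝ) (c₀ c₁ : ℝ) : ℝ≥0∞ :=
  ∑' i : ℤ, ENNReal.ofReal (min c₀ (c₁ * ((2 : ℝ) ^ i)⁻¹) * rbar ρ (2 ^ i))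

/-- pairwise `K` bound hypotheses -/
def PairBd (iE₀ : E₀ →ₗ[ℝ] VE) (iE₁ : E₁ →ₗ[ℝ] VE) (iF₀ : F₀ →ₗ[ℝ] VF) (iF₁ : F₁ →ₗ[ℝ] VF)
    (iG₀ : G₀ →ₗ[ℝ] VG) (iG₁ : G₁ →ₗ[ℝ] VG) (T : VE →ₗ[ℝ] VF →ₗ[ℝ] VG) (c₀ c₁ : ℝ) (n : ℤ) : Prop :=
  ∀ (a : E₀) (b : E₁) (a' : F₀) (b' : F₁), iE₀ a = iE₁ b → iF₀ a' = iF₁ b' →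
    eKfun iG₀ iG₁ (2 ^ n) (T (iE₀ a) (iF₀ a')) ≤ ENNReal.ofReal (c₀ * (‖a‖ * ‖a'‖)) ∧
    eKfun iG₀ iG₁ (2 ^ n) (T (iE₀ a) (iF₀ a')) ≤ ENNReal.ofReal (2 ^ n * (c₁ * (‖b‖ * ‖b'‖)))

lemma PairBd.bound {c₀ c₁ : ℝ} (h0 : 0 ≤ c₀) (h1 : 0 ≤ c₁) {n : ℤ}
    (h : PairBd iE₀ iE₁ iF₀ iF₁ iG₀ iG₁ T c₀ c₁ n) (a : E₀) (b : E₁) (a' : F₀) (b' : F₁)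
    (hab : iE₀ a = iE₁ b) (hab' : iF₀ a' = iF₁ b') (k m : ℤ) :
    eKfun iG₀ iG₁ (2 ^ n) (T (iE₀ a) (iF₀ a')) ≤
      ENNReal.ofReal (min c₀ (c₁ * 2 ^ (n - k - m)) *
        (max ‖a‖ (2 ^ k * ‖b‖) * max ‖a'‖ (2 ^ m * ‖b'‖))) := by
  obtain ⟨h2, h3⟩ := h a b a' b' hab hab'
  have hA : 0 ≤ max ‖a‖ (2 ^ k * ‖b‖) := le_max_of_le_left (norm_nonneg _)
  have hB : 0 ≤ max ‖a'‖ (2 ^ m * ‖b'‖) := le_max_of_le_left (norm_nonneg _)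
  rcases le_total c₀ (c₁ * 2 ^ (n - k - m)) with h4 | h4
  · rw [min_eq_left h4]
    refine h2.trans (ENNReal.ofReal_le_ofReal ?_)
    exact mul_le_mul_of_nonneg_left (mul_le_mul (le_max_left _ _) (le_max_left _ _)
      (norm_nonneg _) hA) h0
  · rw [min_eq_right h4]
    refine h3.trans (ENNReal.ofReal_le_ofReal ?_)
    have h5 : (2 : ℝ) ^ n * (c₁ * (‖b‖ * ‖b'‖)) =
        c₁ * 2 ^ (n - k - m) * ((2 ^ k * ‖b‖) * (2 ^ m * ‖b'‖)) := by
      rw [zpow_sub₀ (by norm_num), zpow_sub₀ (by norm_num)]; field_simp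
    rw [h5]
    exact mul_le_mul_of_nonneg_left (mul_le_mul (le_max_right _ _) (le_max_right _ _)
      (by positivity) hA) (by positivity)

lemma weight_le {ρ : ℝ → ℝ} (hρ : IsClassB ρ) (n k m : ℤ) {A B : ℝ} (hA : 0 ≤ A) (hB : 0 ≤ B) :
    A * B / ρ (2 ^ n) ≤ rbar ρ (2 ^ (-(n - k - m))) *
      (A / (rbar ρ ((2 : ℝ) ^ k)⁻¹)⁻¹ * (B / ρ (2 ^ m))) := by
  have h2 : ∀ n : ℤ, (0 : ℝ) < 2 ^ n := fun n => by positivity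
  have hn := hρ.pos _ (h2 n)
  have hm := hρ.pos _ (h2 m)
  have h1 := rho_mul_le hρ (s := 2 ^ (m - n)) (h2 _) (h2 n)
  rw [← zpow_add₀ (by norm_num), sub_add_cancel] at h1
  have h3 := rbar_mul_le hρ (s := 2 ^ (-(n - k - m))) (t := ((2 : ℝ) ^ k)⁻¹) (h2 _)
    (inv_pos.2 (h2 k))
  rw [← zpow_neg, ← zpow_add₀ (by norm_num), show -(n - k - m) + -k = m - n by ring] at h3
  have h4 : ρ (2 ^ m) ≤ rbar ρ (2 ^ (-(n - k - m))) * rbar ρ (2 ^ (-k)) * ρ (2 ^ n) :=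
    h1.trans (mul_le_mul_of_nonneg_right h3 hn.le)
  rw [div_inv_eq_mul, ← zpow_neg, div_le_iff₀ hn]
  have h5 : rbar ρ (2 ^ (-(n - k - m))) * (A * rbar ρ (2 ^ (-k)) * (B / ρ (2 ^ m))) * ρ (2 ^ n)
      = (A * B / ρ (2 ^ m)) * (rbar ρ (2 ^ (-(n - k - m))) * rbar ρ (2 ^ (-k)) * ρ (2 ^ n)) := by
    ring
  rw [h5]
  calc A * B = (A * B / ρ (2 ^ m)) * ρ (2 ^ m) := by field_simp
    _ ≤ _ := mul_le_mul_of_nonneg_left h4 (by positivity)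

lemma conv_est (hbdd : eBilBdd (esumNorm iE₀ iE₁) (esumNorm iF₀ iF₁) (esumNorm iG₀ iG₁)
      (fun x y => T x y)) {ρ : ℝ → ℝ} (hρ : IsClassB ρ)
    {p q r : ℝ≥0∞} (hp : 1 ≤ p) (hq : 1 ≤ q) (hr : 1 ≤ r) (hpqr : 1 / r + 1 = 1 / p + 1 / q)
    {x : VE} {a : ℤ → E₀} {b : ℤ → E₁} (hx : IsJRep iE₀ iE₁ x a b)
    {y : VF} {a' : ℤ → F₀} {b' : ℤ → F₁} (hy : IsJRep iF₀ iF₁ y a' b')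
    {c₀ c₁ : ℝ} (h0 : 0 ≤ c₀) (h1 : 0 ≤ c₁) (S : ℤ → Prop) [DecidablePred S]
    (hS : ∀ n, S n → PairBd iE₀ iE₁ iF₀ iF₁ iG₀ iG₁ T c₀ c₁ n) :
    eLq r (fun n => if S n then eKfun iG₀ iG₁ (2 ^ n) (T x y) / ENNReal.ofReal (ρ (2 ^ n)) else 0)
      ≤ kerSize ρ c₀ c₁ *
        (eLq p (fun n => ENNReal.ofReal (max ‖a n‖ (2 ^ n * ‖b n‖) / (rbar ρ ((2 : ℝ) ^ n)⁻¹)⁻¹)) *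
         eLq q (fun n => ENNReal.ofReal (max ‖a' n‖ (2 ^ n * ‖b' n‖) / ρ (2 ^ n)))) := by
  have h2 : ∀ n : ℤ, (0 : ℝ) < 2 ^ n := fun n => by positivity
  set α : ℤ → ℝ≥0∞ := fun n =>
    ENNReal.ofReal (max ‖a n‖ (2 ^ n * ‖b n‖) / (rbar ρ ((2 : ℝ) ^ n)⁻¹)⁻¹) with hα
  set β : ℤ → ℝ≥0∞ := fun n => ENNReal.ofReal (max ‖a' n‖ (2 ^ n * ‖b' n‖) / ρ (2 ^ n)) with hβ
  let g : ℤ → ℝ≥0∞ := fun i => ENNReal.ofReal (min c₀ (c₁ * 2 ^ i) * rbar ρ (2 ^ (-i)))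
  have hg : ∑' i, g i = kerSize ρ c₀ c₁ := by
    rw [← (Equiv.neg ℤ).tsum_eq g]
    unfold kerSize
    refine tsum_congr fun i => ?_
    simp only [g, Equiv.neg_apply, zpow_neg, inv_inv]
  let c : ℤ → ℝ≥0∞ := fun j => ∑' k, α k * β (j - k)
  rw [← hg]
  refine le_trans (eLq_mono r fun n => ?_) ((young_one hr g c).trans
    (mul_le_mul' le_rfl (young hp hq hr hpqr α β)))
  split_ifs with hn
  swap
  · exact zero_le
  have hρn := hρ.pos _ (h2 n)
  have hρ0 : ENNReal.ofReal (ρ (2 ^ n)) ≠ 0 := by simpa using hρn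
  have key : ∀ k m, eKfun iG₀ iG₁ (2 ^ n) (T (iE₀ (a k)) (iF₀ (a' m))) ≤
      (g (n - k - m) * (α k * β m)) * ENNReal.ofReal (ρ (2 ^ n)) := by
    intro k m
    refine ((hS n hn).bound h0 h1 _ _ _ _ (hx.1 k) (hy.1 m) k m).trans ?_
    have hA : 0 ≤ max ‖a k‖ (2 ^ k * ‖b k‖) := le_max_of_le_left (norm_nonneg _)
    have hB : 0 ≤ max ‖a' m‖ (2 ^ m * ‖b' m‖) := le_max_of_le_left (norm_nonneg _)
    have hmin : 0 ≤ min c₀ (c₁ * 2 ^ (n - k - m)) := le_min h0 (mul_nonneg h1 (h2 _).le)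
    have hrb := (rbar_pos hρ (h2 (-(n - k - m)))).le
    have hrk := (rbar_pos hρ (inv_pos.2 (h2 k))).le
    have hρm := (hρ.pos _ (h2 m)).le
    simp only [g, hα, hβ]
    rw [← ENNReal.ofReal_mul (by positivity), ← ENNReal.ofReal_mul (by positivity),
      ← ENNReal.ofReal_mul (by positivity)]
    refine ENNReal.ofReal_le_ofReal ?_
    have := weight_le hρ n k m hA hB
    rw [div_le_iff₀ hρn] at this
    rw [mul_assoc, mul_assoc]
    rw [mul_assoc] at this
    exact mul_le_mul_of_nonneg_left this hmin
  rw [ENNReal.div_le_iff hρ0 ENNReal.ofReal_ne_top]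
  refine (eKfun_T_le hbdd hx hy (h2 n)).trans
    ((ENNReal.tsum_le_tsum fun k => ENNReal.tsum_le_tsum fun m => key k m).trans (le_of_eq ?_))
  simp_rw [ENNReal.tsum_mul_right]
  congr 1
  have e1 : ∀ k, ∑' m, g (n - k - m) * (α k * β m) = ∑' i, g i * (α k * β (n - k - i)) := by
    intro k
    rw [← tsum_shift (n - k)]
    refine tsum_congr fun i => ?_
    rw [_root_.sub_sub_cancel]
  simp_rw [e1]
  rw [ENNReal.tsum_comm]
  refine tsum_congr fun i => ?_
  rw [ENNReal.tsum_mul_left]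
  congr 1
  refine tsum_congr fun k => ?_
  rw [sub_right_comm]

end bil


lemma kerSize_ne_top {ρ : ℝ → ℝ} (hρ : IsClassBpm ρ) {M : ℝ} (hM : 0 ≤ M) :
    kerSize ρ M M ≤ ENNReal.ofReal M * ∑' i, wt ρ i := by
  unfold kerSize
  rw [← ENNReal.tsum_mul_left]
  refine ENNReal.tsum_le_tsum fun i => ?_
  unfold wt
  rw [← ENNReal.ofReal_mul hM]
  refine ENNReal.ofReal_le_ofReal (le_of_eq ?_)
  rw [← mul_assoc, mul_min_of_nonneg _ _ hM, mul_one]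

lemma kerSize_small {ρ : ℝ → ℝ} (hρ : IsClassBpm ρ) {M : ℝ} (hM : 0 < M) {η : ℝ≥0∞} (hη : 0 < η) :
    ∃ ε : ℝ, 0 < ε ∧ ε ≤ M ∧ kerSize ρ ε M ≤ η ∧ kerSize ρ M ε ≤ η := by
  have hg : ∑' i, ENNReal.ofReal M * wt ρ i ≠ ∞ := by
    rw [ENNReal.tsum_mul_left]
    exact ENNReal.mul_ne_top ENNReal.ofReal_ne_top (wt_summable hρ)
  have hw : ∀ i, ENNReal.ofReal M * wt ρ i =
      ENNReal.ofReal (min M (M * ((2 : ℝ) ^ i)⁻¹) * rbar ρ (2 ^ i)) := by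
    intro i
    unfold wt
    rw [← ENNReal.ofReal_mul hM.le, ← mul_assoc, mul_min_of_nonneg _ _ hM.le, mul_one]
  obtain ⟨ε₁, h1, h1'⟩ := kernel_small hg (fun i => rbar ρ ((2 : ℝ) ^ i)) hη
  obtain ⟨ε₂, h2, h2'⟩ := kernel_small hg (fun i => ((2 : ℝ) ^ i)⁻¹ * rbar ρ ((2 : ℝ) ^ i)) hη
  have hr : ∀ i : ℤ, 0 ≤ rbar ρ ((2 : ℝ) ^ i) := fun i =>
    (rbar_pos hρ.toIsClassB (by positivity)).le
  refine ⟨min M (min ε₁ ε₂), by positivity, min_le_left _ _, le_trans ?_ h1', le_trans ?_ h2'⟩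
  · unfold kerSize
    refine ENNReal.tsum_le_tsum fun i => le_min ?_ ?_
    · rw [hw]
      refine ENNReal.ofReal_le_ofReal (mul_le_mul_of_nonneg_right ?_ (hr i))
      exact min_le_min (min_le_left _ _) le_rfl
    · refine ENNReal.ofReal_le_ofReal (mul_le_mul_of_nonneg_right ?_ (hr i))
      exact (min_le_left _ _).trans ((min_le_right _ _).trans (min_le_left _ _))
  · unfold kerSize
    refine ENNReal.tsum_le_tsum fun i => le_min ?_ ?_
    · rw [hw]
      refine ENNReal.ofReal_le_ofReal (mul_le_mul_of_nonneg_right ?_ (hr i))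
      exact min_le_min le_rfl (mul_le_mul_of_nonneg_right (min_le_left _ _) (by positivity))
    · refine ENNReal.ofReal_le_ofReal ?_
      rw [← mul_assoc]
      refine mul_le_mul_of_nonneg_right ?_ (hr i)
      exact (min_le_right _ _).trans (mul_le_mul_of_nonneg_right
        ((min_le_right _ _).trans (min_le_right _ _)) (by positivity))

section bil
variable {E₀ E₁ F₀ F₁ G₀ G₁ VE VF VG : Type*}
    [NormedAddCommGroup E₀] [NormedSpace ℝ E₀] [NormedAddCommGroup E₁] [NormedSpace ℝ E₁]
    [NormedAddCommGroup F₀] [NormedSpace ℝ F₀] [NormedAddCommGroup F₁] [NormedSpace ℝ F₁]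
    [NormedAddCommGroup G₀] [NormedSpace ℝ G₀] [NormedAddCommGroup G₁] [NormedSpace ℝ G₁]
    [AddCommGroup VE] [Module ℝ VE]
    [AddCommGroup VF] [Module ℝ VF]
    [AddCommGroup VG] [Module ℝ VG]
    {iE₀ : E₀ →ₗ[ℝ] VE} {iE₁ : E₁ →ₗ[ℝ] VE}
    {iF₀ : F₀ →ₗ[ℝ] VF} {iF₁ : F₁ →ₗ[ℝ] VF}
    {iG₀ : G₀ →ₗ[ℝ] VG} {iG₁ : G₁ →ₗ[ℝ] VG}
    {T : VE →ₗ[ℝ] VF →ₗ[ℝ] VG}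

lemma zpow_two_atTop : Tendsto (fun n : ℤ => ((2 : ℝ) ^ n)⁻¹) atTop (nhds 0) := by
  refine Tendsto.inv_tendsto_atTop ?_
  refine tendsto_atTop.2 fun b => ?_
  obtain ⟨n, hn⟩ := pow_unbounded_of_one_lt b (one_lt_two : (1 : ℝ) < 2)
  filter_upwards [eventually_ge_atTop (n : ℤ)] with m hm
  rw [← zpow_natCast] at hn
  exact hn.le.trans (zpow_le_zpow_right₀ one_le_two hm)

lemma zpow_two_atBot : Tendsto (fun n : ℤ => (2 : ℝ) ^ n) atBot (nhds 0) := by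
  have := zpow_two_atTop.comp tendsto_neg_atBot_atTop
  refine this.congr fun n => ?_
  simp

lemma pairBd_of {M : ℝ}
    (h0 : ∀ a a', enormOf iG₀ (T (iE₀ a) (iF₀ a')) ≤ ENNReal.ofReal (M * ‖a‖ * ‖a'‖))
    (h1 : ∀ a a', enormOf iG₁ (T (iE₁ a) (iF₁ a')) ≤ ENNReal.ofReal (M * ‖a‖ * ‖a'‖)) (n : ℤ) :
    PairBd iE₀ iE₁ iF₀ iF₁ iG₀ iG₁ T M M n := by
  intro a b a' b' hab hab'
  refine ⟨(eKfun_le_enorm₀ _ _ _ _).trans ?_, (eKfun_le_enorm₁ _ _ (by positivity) _).trans ?_⟩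
  · rw [← mul_assoc]; exact h0 _ _
  · rw [hab, hab', ENNReal.ofReal_mul (by positivity), ← mul_assoc M]
    exact mul_le_mul' le_rfl (h1 _ _)

/-- Abstract small-`K` lemma by homogeneity and compactness. `N` is a norm for which the image of
the unit ball is totally bounded, `K n` a family of seminorms. -/
lemma small_of_compact {E F G : Type*} [NormedAddCommGroup E] [NormedSpace ℝ E]
    [NormedAddCommGroup F] [NormedSpace ℝ F] [NormedAddCommGroup G] [NormedSpace ℝ G]
    {iE : E →ₗ[ℝ] VE} {iF : F →ₗ[ℝ] VF} {iG : G →ₗ[ℝ] VG}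
    (hc : eBilCompact (enormOf iE) (enormOf iF) (enormOf iG) (fun x y => T x y))
    (X : Submodule ℝ VE) (Y : Submodule ℝ VF)
    (K : ℤ → VG → ℝ≥0∞) (hKadd : ∀ n x y, K n (x + y) ≤ K n x + K n y)
    (hKs : ∀ n (c : ℝ) x, K n (c • x) ≤ ENNReal.ofReal |c| * K n x)
    (hKN : ∀ n x, K n x ≤ enormOf iG x) (l : Filter ℤ)
    (hlim : ∀ x ∈ X, ∀ y ∈ Y, ∀ ε : ℝ, 0 < ε → ∀ᶠ n in l, K n (T x y) ≤ ENNReal.ofReal ε)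
    {ε : ℝ} (hε : 0 < ε) :
    ∀ᶠ n in l, ∀ a a', iE a ∈ X → iF a' ∈ Y →
      K n (T (iE a) (iF a')) ≤ ENNReal.ofReal (ε * (‖a‖ * ‖a'‖)) := by
  have hε4 : 0 < ε / 4 := by positivity
  obtain ⟨D, hD⟩ := hc (ε / 4) hε4
  obtain ⟨t, ht, ht'⟩ := net_inside (enormOf iG) (enormOf_sub_sub_le iG) D
    {i : E × F | ‖i.1‖ ≤ 1 ∧ ‖i.2‖ ≤ 1 ∧ iE i.1 ∈ X ∧ iF i.2 ∈ Y}
    (fun i => T (iE i.1) (iF i.2)) (ENNReal.ofReal (ε / 4)) (by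
      rintro ⟨a, a'⟩ ⟨h1, h2, -, -⟩
      refine hD _ _ ((enormOf_le _ _).trans ?_) ((enormOf_le _ _).trans ?_)
      · exact ENNReal.ofReal_le_one.2 h1
      · exact ENNReal.ofReal_le_one.2 h2)
  have hev : ∀ᶠ n in l, ∀ j ∈ t, K n (T (iE j.1) (iF j.2)) ≤ ENNReal.ofReal (ε / 2) := by
    rw [Finset.eventually_all]
    intro j hj
    exact hlim _ (ht j hj).2.2.1 _ (ht j hj).2.2.2 _ (by positivity)
  filter_upwards [hev] with n hn
  have hunit : ∀ a a', ‖a‖ ≤ 1 → ‖a'‖ ≤ 1 → iE a ∈ X → iF a' ∈ Y →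
      K n (T (iE a) (iF a')) ≤ ENNReal.ofReal ε := by
    intro a a' h1 h2 h3 h4
    obtain ⟨j, hj, hlt⟩ := ht' (a, a') ⟨h1, h2, h3, h4⟩
    have h5 := hKadd n (T (iE a) (iF a') - T (iE j.1) (iF j.2)) (T (iE j.1) (iF j.2))
    rw [sub_add_cancel] at h5
    refine h5.trans ((add_le_add ((hKN _ _).trans hlt.le) (hn j hj)).trans ?_)
    rw [← ENNReal.ofReal_add (by positivity) (by positivity),
      ← ENNReal.ofReal_add (by positivity) (by positivity)]
    exact ENNReal.ofReal_le_ofReal (by linarith)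
  have hK0 : K n 0 = 0 := by
    have := hKs n 0 0
    simpa using this
  intro a a' h3 h4
  by_cases ha : a = 0
  · subst ha; simp [hK0]
  by_cases ha' : a' = 0
  · subst ha'; simp [hK0]
  have hna : ‖a‖ ≠ 0 := by simpa using ha
  have hna' : ‖a'‖ ≠ 0 := by simpa using ha'
  have h5 := hunit (‖a‖⁻¹ • a) (‖a'‖⁻¹ • a') (by rw [norm_smul]; simp [hna])
    (by rw [norm_smul]; simp [hna']) (by rw [map_smul]; exact X.smul_mem _ h3)
    (by rw [map_smul]; exact Y.smul_mem _ h4)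
  have h6 : T (iE a) (iF a') =
      (‖a‖ * ‖a'‖) • T (iE (‖a‖⁻¹ • a)) (iF (‖a'‖⁻¹ • a')) := by
    simp only [map_smul, LinearMap.smul_apply, smul_smul]
    rw [show ‖a‖ * ‖a'‖ * (‖a'‖⁻¹ * ‖a‖⁻¹) = 1 by field_simp, one_smul]
  rw [h6]
  refine (hKs _ _ _).trans ?_
  rw [abs_of_nonneg (by positivity), mul_comm ε, ENNReal.ofReal_mul (p := ‖a‖ * ‖a'‖) (by positivity)]
  exact mul_le_mul' le_rfl h5

lemma pair_atBot {M : ℝ} (hM0 : 0 ≤ M)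
    (h1 : ∀ a a', enormOf iG₁ (T (iE₁ a) (iF₁ a')) ≤ ENNReal.ofReal (M * ‖a‖ * ‖a'‖))
    (hP : ∀ n, PairBd iE₀ iE₁ iF₀ iF₁ iG₀ iG₁ T M M n)
    (hc0 : eBilCompact (enormOf iE₀) (enormOf iF₀) (enormOf iG₀) (fun x y => T x y))
    {ε : ℝ} (hε : 0 < ε) : ∀ᶠ n in atBot, PairBd iE₀ iE₁ iF₀ iF₁ iG₀ iG₁ T ε M n := by
  have h := small_of_compact hc0 (LinearMap.range iE₁) (LinearMap.range iF₁)
    (fun n x => eKfun iG₀ iG₁ (2 ^ n) x) (fun n x y => eKfun_add_le _ _ (by positivity) _ _)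
    (fun n c x => eKfun_smul_le _ _ _ _ _) (fun n x => eKfun_le_enorm₀ _ _ _ _) atBot (by
      rintro _ ⟨b, rfl⟩ _ ⟨b', rfl⟩ ε hε
      have hl : Tendsto (fun n : ℤ => (2 : ℝ) ^ n * (M * ‖b‖ * ‖b'‖)) atBot (nhds 0) := by
        have : Tendsto (fun n : ℤ => (2 : ℝ) ^ n) atBot (nhds 0) :=
          zpow_two_atBot
        simpa using this.mul_const (M * ‖b‖ * ‖b'‖)
      filter_upwards [hl.eventually (gt_mem_nhds hε)] with n hn
      refine (eKfun_le_enorm₁ _ _ (by positivity) _).trans ?_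
      refine (mul_le_mul' le_rfl (h1 _ _)).trans ?_
      rw [← ENNReal.ofReal_mul (by positivity)]
      exact ENNReal.ofReal_le_ofReal hn.le) hε
  filter_upwards [h] with n hn
  intro a b a' b' hab hab'
  exact ⟨hn a a' ⟨b, hab.symm⟩ ⟨b', hab'.symm⟩, (hP n a b a' b' hab hab').2⟩

lemma pair_atTop {M : ℝ} (hM0 : 0 ≤ M)
    (h0 : ∀ a a', enormOf iG₀ (T (iE₀ a) (iF₀ a')) ≤ ENNReal.ofReal (M * ‖a‖ * ‖a'‖))
    (hP : ∀ n, PairBd iE₀ iE₁ iF₀ iF₁ iG₀ iG₁ T M M n)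
    (hc1 : eBilCompact (enormOf iE₁) (enormOf iF₁) (enormOf iG₁) (fun x y => T x y))
    {ε : ℝ} (hε : 0 < ε) : ∀ᶠ n in atTop, PairBd iE₀ iE₁ iF₀ iF₁ iG₀ iG₁ T M ε n := by
  have hn2 : ∀ n : ℤ, ENNReal.ofReal (((2 : ℝ) ^ n)⁻¹) * ENNReal.ofReal ((2 : ℝ) ^ n) = 1 := by
    intro n
    rw [← ENNReal.ofReal_mul (by positivity), inv_mul_cancel₀ (by positivity), ENNReal.ofReal_one]
  have h := small_of_compact hc1 (LinearMap.range iE₀) (LinearMap.range iF₀)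
    (fun n x => ENNReal.ofReal (((2 : ℝ) ^ n)⁻¹) * eKfun iG₀ iG₁ (2 ^ n) x)
    (fun n x y => by
      rw [← mul_add]; exact mul_le_mul' le_rfl (eKfun_add_le _ _ (by positivity) _ _))
    (fun n c x => by
      rw [mul_left_comm]; exact mul_le_mul' le_rfl (eKfun_smul_le _ _ _ _ _))
    (fun n x => by
      refine (mul_le_mul' le_rfl (eKfun_le_enorm₁ _ _ (by positivity) _)).trans ?_
      rw [← mul_assoc, hn2, one_mul]) atTop (by
      rintro _ ⟨b, rfl⟩ _ ⟨b', rfl⟩ ε hε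
      have hl : Tendsto (fun n : ℤ => ((2 : ℝ) ^ n)⁻¹ * (M * ‖b‖ * ‖b'‖)) atTop (nhds 0) := by
        have : Tendsto (fun n : ℤ => ((2 : ℝ) ^ n)⁻¹) atTop (nhds 0) :=
          zpow_two_atTop
        simpa using this.mul_const (M * ‖b‖ * ‖b'‖)
      filter_upwards [hl.eventually (gt_mem_nhds hε)] with n hn
      refine (mul_le_mul' le_rfl ((eKfun_le_enorm₀ _ _ _ _).trans (h0 _ _))).trans ?_
      rw [← ENNReal.ofReal_mul (by positivity)]
      exact ENNReal.ofReal_le_ofReal hn.le) hε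
  filter_upwards [h] with n hn
  intro a b a' b' hab hab'
  refine ⟨(hP n a b a' b' hab hab').1, ?_⟩
  have h3 := hn b b' ⟨a, hab⟩ ⟨a', hab'⟩
  rw [← hab, ← hab'] at h3
  calc _ = ENNReal.ofReal ((2 : ℝ) ^ n) * (ENNReal.ofReal (((2 : ℝ) ^ n)⁻¹) *
        eKfun iG₀ iG₁ (2 ^ n) (T (iE₀ a) (iF₀ a'))) := by
        rw [← mul_assoc, mul_comm (ENNReal.ofReal ((2 : ℝ) ^ n)), hn2, one_mul]
    _ ≤ _ := by
      rw [ENNReal.ofReal_mul (by positivity)]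
      exact mul_le_mul' le_rfl h3
end bil


lemma double_sum {p q r : ℝ≥0∞} (hp : 1 ≤ p) (hq : 1 ≤ q) (hr : 1 ≤ r)
    (hpqr : 1 / r + 1 = 1 / p + 1 / q) (f α β : ℤ → ℝ≥0∞) (P : Finset (ℤ × ℤ)) :
    ∑ x ∈ P, f (x.1 + x.2) * (α x.1 * β x.2) ≤ (∑' j, f j) * (eLq p α * eLq q β) := by
  refine (ENNReal.sum_le_tsum (f := fun x : ℤ × ℤ => f (x.1 + x.2) * (α x.1 * β x.2)) P).trans ?_
  rw [ENNReal.tsum_prod (f := fun k m => f (k + m) * (α k * β m))]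
  have e1 : ∀ k, ∑' m, f (k + m) * (α k * β m) = ∑' j, f j * (α k * β (j - k)) := by
    intro k
    rw [← (Equiv.addLeft k).tsum_eq (fun j => f j * (α k * β (j - k)))]
    refine tsum_congr fun m => ?_
    simp
  simp_rw [e1]
  rw [ENNReal.tsum_comm, ← ENNReal.tsum_mul_right]
  refine ENNReal.tsum_le_tsum fun j => ?_
  rw [ENNReal.tsum_mul_left]
  refine mul_le_mul' le_rfl ?_
  exact (le_eLq hr (fun j => ∑' k, α k * β (j - k)) j).trans (young hp hq hr hpqr α β)

lemma mem_scaled {G ι : Type*} [NormedAddCommGroup G] [NormedSpace ℝ G] {C : Set G}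
    (hC : Convex ℝ C) (h0 : (0 : G) ∈ C) (P : Finset ι) (w : ι → ℝ) (s : ι → G)
    (hw : ∀ i ∈ P, 0 ≤ w i) (hs : ∀ i ∈ P, s i ∈ C) {L : ℝ} (hL : 0 < L) (hwL : ∑ i ∈ P, w i ≤ L) :
    ∃ c ∈ C, ∑ i ∈ P, w i • s i = L • c := by
  rcases (Finset.sum_nonneg hw).eq_or_lt with h | h
  · refine ⟨0, h0, ?_⟩
    rw [smul_zero]
    refine Finset.sum_eq_zero fun i hi => ?_
    rw [(Finset.sum_eq_zero_iff_of_nonneg hw).1 h.symm i hi, zero_smul]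
  · have hm := hC.centerMass_mem hw h hs
    refine ⟨_, hC.smul_mem_of_zero_mem h0 hm (t := (∑ i ∈ P, w i) / L)
      ⟨by positivity, (div_le_one hL).2 hwL⟩, ?_⟩
    rw [smul_smul, mul_div_cancel₀ _ hL.ne', Finset.centerMass, smul_smul,
      mul_inv_cancel₀ h.ne', one_smul]

section bil
variable {E₀ E₁ F₀ F₁ G₀ G₁ VE VF VG : Type*}
    [NormedAddCommGroup E₀] [NormedSpace ℝ E₀] [NormedAddCommGroup E₁] [NormedSpace ℝ E₁]
    [NormedAddCommGroup F₀] [NormedSpace ℝ F₀] [NormedAddCommGroup F₁] [NormedSpace ℝ F₁]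
    [NormedAddCommGroup G₀] [NormedSpace ℝ G₀] [NormedAddCommGroup G₁] [NormedSpace ℝ G₁]
    [AddCommGroup VE] [Module ℝ VE]
    [AddCommGroup VF] [Module ℝ VF]
    [AddCommGroup VG] [Module ℝ VG]
    {iE₀ : E₀ →ₗ[ℝ] VE} {iE₁ : E₁ →ₗ[ℝ] VE}
    {iF₀ : F₀ →ₗ[ℝ] VF} {iF₁ : F₁ →ₗ[ℝ] VF}
    {iG₀ : G₀ →ₗ[ℝ] VG} {iG₁ : G₁ →ₗ[ℝ] VG}
    {T : VE →ₗ[ℝ] VF →ₗ[ℝ] VG}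

/-- The image of the unit balls. -/
def imgSet (iE₀ : E₀ →ₗ[ℝ] VE) (iF₀ : F₀ →ₗ[ℝ] VF) (iG₀ : G₀ →ₗ[ℝ] VG)
    (T : VE →ₗ[ℝ] VF →ₗ[ℝ] VG) : Set G₀ :=
  {g | ∃ a a', ‖a‖ ≤ 1 ∧ ‖a'‖ ≤ 1 ∧ iG₀ g = T (iE₀ a) (iF₀ a')}

lemma imgSet_tb (hinj : Function.Injective iG₀)
    (hc0 : eBilCompact (enormOf iE₀) (enormOf iF₀) (enormOf iG₀) (fun x y => T x y)) :
    TotallyBounded (imgSet iE₀ iF₀ iG₀ T) := by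
  rw [Metric.totallyBounded_iff]
  intro ε hε
  obtain ⟨D, hD⟩ := hc0 (ε / 2) (by positivity)
  obtain ⟨t, ht, ht'⟩ := net_inside (enormOf iG₀) (enormOf_sub_sub_le iG₀) D
    (imgSet iE₀ iF₀ iG₀ T) (fun g => iG₀ g) (ENNReal.ofReal (ε / 2)) (by
      rintro g ⟨a, a', h1, h2, h3⟩
      simp only [h3]
      exact hD _ _ ((enormOf_le _ _).trans (ENNReal.ofReal_le_one.2 h1))
        ((enormOf_le _ _).trans (ENNReal.ofReal_le_one.2 h2)))
  refine ⟨t, t.finite_toSet, fun g hg => ?_⟩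
  obtain ⟨j, hj, hlt⟩ := ht' g hg
  obtain ⟨d, hd, hd'⟩ := enormOf_lt_iff.1 hlt
  rw [← map_sub] at hd
  have := hinj hd
  subst this
  rw [← ENNReal.ofReal_add (by positivity) (by positivity), _root_.add_halves] at hd'
  refine mem_iUnion₂.2 ⟨j, hj, ?_⟩
  rw [Metric.mem_ball, dist_eq_norm]
  exact (ENNReal.ofReal_lt_ofReal_iff hε).1 hd'

lemma exists_unit {M : ℝ}
    (h0 : ∀ a a', enormOf iG₀ (T (iE₀ a) (iF₀ a')) ≤ ENNReal.ofReal (M * ‖a‖ * ‖a'‖))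
    (a : E₀) (a' : F₀) : ∃ g ∈ imgSet iE₀ iF₀ iG₀ T,
      T (iE₀ a) (iF₀ a') = iG₀ ((‖a‖ * ‖a'‖) • g) := by
  by_cases ha : a = 0
  · exact ⟨0, ⟨0, 0, by simp, by simp, by simp⟩, by simp [ha]⟩
  by_cases ha' : a' = 0
  · exact ⟨0, ⟨0, 0, by simp, by simp, by simp⟩, by simp [ha']⟩
  have hna : ‖a‖ ≠ 0 := by simpa using ha
  have hna' : ‖a'‖ ≠ 0 := by simpa using ha'
  have h6 : T (iE₀ a) (iF₀ a') =
      (‖a‖ * ‖a'‖) • T (iE₀ (‖a‖⁻¹ • a)) (iF₀ (‖a'‖⁻¹ • a')) := by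
    simp only [map_smul, LinearMap.smul_apply, smul_smul]
    rw [show ‖a‖ * ‖a'‖ * (‖a'‖⁻¹ * ‖a‖⁻¹) = 1 by field_simp, one_smul]
  obtain ⟨g, hg, -⟩ := enormOf_lt_iff.1
    ((h0 (‖a‖⁻¹ • a) (‖a'‖⁻¹ • a')).trans_lt ENNReal.ofReal_lt_top)
  refine ⟨g, ⟨_, _, ?_, ?_, hg⟩, ?_⟩
  · rw [norm_smul]; simp [hna]
  · rw [norm_smul]; simp [hna']
  · rw [h6, ← hg, map_smul]

set_option maxHeartbeats 1000000 in
lemma mid_net (hinj : Function.Injective iG₀)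
    (hbdd : eBilBdd (esumNorm iE₀ iE₁) (esumNorm iF₀ iF₁) (esumNorm iG₀ iG₁)
      (fun x y => T x y)) {ρ : ℝ → ℝ} (hρ : IsClassBpm ρ)
    {p q r : ℝ≥0∞} (hp : 1 ≤ p) (hq : 1 ≤ q) (hr : 1 ≤ r) (hpqr : 1 / r + 1 = 1 / p + 1 / q)
    {M : ℝ} (hM : 0 ≤ M)
    (h0 : ∀ a a', enormOf iG₀ (T (iE₀ a) (iF₀ a')) ≤ ENNReal.ofReal (M * ‖a‖ * ‖a'‖))
    (hP : ∀ n, PairBd iE₀ iE₁ iF₀ iF₁ iG₀ iG₁ T M M n)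
    (hc0 : eBilCompact (enormOf iE₀) (enormOf iF₀) (enormOf iG₀) (fun x y => T x y))
    {δ : ℝ} (hδ : 0 < δ) :
    ∃ D : Finset VG, ∀ (x : VE) (a : ℤ → E₀) (b : ℤ → E₁) (y : VF) (a' : ℤ → F₀) (b' : ℤ → F₁),
      IsJRep iE₀ iE₁ x a b → IsJRep iF₀ iF₁ y a' b' →
      eLq p (fun n => ENNReal.ofReal (max ‖a n‖ (2 ^ n * ‖b n‖) / (rbar ρ ((2 : ℝ) ^ n)⁻¹)⁻¹)) ≤ 2 →
      eLq q (fun n => ENNReal.ofReal (max ‖a' n‖ (2 ^ n * ‖b' n‖) / ρ (2 ^ n))) ≤ 2 →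
      ∃ c ∈ D, esumNorm iG₀ iG₁ (T x y - c) < ENNReal.ofReal δ := by
  classical
  have hB := hρ.toIsClassB
  have h2 : ∀ n : ℤ, (0 : ℝ) < 2 ^ n := fun n => by positivity
  have hrp : ∀ n : ℤ, 0 < rbar ρ ((2 : ℝ) ^ n) := fun n => rbar_pos hB (h2 n)
  have hft : ∑' i, ENNReal.ofReal M * wt ρ i ≠ ∞ := by
    rw [ENNReal.tsum_mul_left]
    exact ENNReal.mul_ne_top ENNReal.ofReal_ne_top (wt_summable hρ)
  obtain ⟨I, hI⟩ := exists_finset_tail hft (show 0 < ENNReal.ofReal (δ / 16) by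
    simpa using hδ)
  set L : ℝ := (∑ j ∈ I, rbar ρ ((2 : ℝ) ^ j)) * 4 + 1 with hL
  have hLpos : 0 < L := by
    have : 0 ≤ ∑ j ∈ I, rbar ρ ((2 : ℝ) ^ j) := Finset.sum_nonneg fun j _ => (hrp j).le
    positivity
  have htb : TotallyBounded (convexHull ℝ (imgSet iE₀ iF₀ iG₀ T)) :=
    (totallyBounded_convexHull).2 (imgSet_tb hinj hc0)
  obtain ⟨t, htf, htc⟩ := Metric.totallyBounded_iff.1 htb (δ / 4 / L) (by positivity)
  refine ⟨htf.toFinset.image (fun g => iG₀ (L • g)), ?_⟩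
  intro x a b y a' b' hx hy hα hβ
  set α : ℤ → ℝ≥0∞ := fun n =>
    ENNReal.ofReal (max ‖a n‖ (2 ^ n * ‖b n‖) / (rbar ρ ((2 : ℝ) ^ n)⁻¹)⁻¹) with hαd
  set β : ℤ → ℝ≥0∞ := fun n => ENNReal.ofReal (max ‖a' n‖ (2 ^ n * ‖b' n‖) / ρ (2 ^ n)) with hβd
  have h4 : eLq p α * eLq q β ≤ 4 := by
    refine (mul_le_mul' hα hβ).trans ?_
    norm_num
  have hA : ∀ k, 0 ≤ max ‖a k‖ (2 ^ k * ‖b k‖) := fun k => le_max_of_le_left (norm_nonneg _)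
  have hA' : ∀ k, 0 ≤ max ‖a' k‖ (2 ^ k * ‖b' k‖) := fun k => le_max_of_le_left (norm_nonneg _)
  have hprod : ∀ k m, ENNReal.ofReal (max ‖a k‖ (2 ^ k * ‖b k‖) * max ‖a' m‖ (2 ^ m * ‖b' m‖)) ≤
      ENNReal.ofReal (rbar ρ (2 ^ (k + m))) * (α k * β m) := by
    intro k m
    have := weight_le hB 0 k m (hA k) (hA' m)
    rw [zpow_zero, hB.one, div_one, show -(0 - k - m) = k + m by ring] at this
    have hrk := (rbar_pos hB (inv_pos.2 (h2 k))).le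
    have hρm := (hB.pos _ (h2 m)).le
    have hAk := hA k
    simp only [hαd, hβd]
    rw [← ENNReal.ofReal_mul (by positivity), ← ENNReal.ofReal_mul (hrp _).le]
    exact ENNReal.ofReal_le_ofReal this
  obtain ⟨Gs, Hs, hGH⟩ := approx (iG₀ := iG₀) (iG₁ := iG₁) hbdd hx hy
    (show 0 < ENNReal.ofReal (δ / 4) by simpa using hδ)
  set f : ℤ × ℤ → VG := fun p => T (iE₀ (a p.1)) (iF₀ (a' p.2)) with hf
  set P1 := (Gs ×ˢ Hs).filter (fun p => p.1 + p.2 ∈ I) with hP1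
  set P2 := (Gs ×ˢ Hs).filter (fun p => ¬ p.1 + p.2 ∈ I) with hP2
  have hsplit : ∑ p ∈ Gs ×ˢ Hs, f p = ∑ p ∈ P1, f p + ∑ p ∈ P2, f p :=
    (Finset.sum_filter_add_sum_filter_not _ _ _).symm
  -- tail
  have htail : esumNorm iG₀ iG₁ (∑ p ∈ P2, f p) ≤ ENNReal.ofReal (δ / 4) := by
    refine (eKfun_sum_le _ _ zero_le_one _ _).trans ?_
    have hb : ∀ p ∈ P2, eKfun iG₀ iG₁ 1 (f p) ≤
        (fun i => if i ∈ I then 0 else ENNReal.ofReal M * wt ρ i) (p.1 + p.2) *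
          (α p.1 * β p.2) := by
      intro p hpP
      have hpI := (Finset.mem_filter.1 hpP).2
      simp only [hpI, if_false]
      have h := (hP 0).bound hM hM _ _ _ _ (hx.1 p.1) (hy.1 p.2) p.1 p.2
      rw [zpow_zero] at h
      refine h.trans ?_
      have hmin : min M (M * 2 ^ (0 - p.1 - p.2)) = M * min 1 ((2 : ℝ) ^ (p.1 + p.2))⁻¹ := by
        rw [mul_min_of_nonneg _ _ hM, mul_one, ← zpow_neg, show 0 - p.1 - p.2 = -(p.1 + p.2) by ring]
      have hmn : 0 ≤ min 1 ((2 : ℝ) ^ (p.1 + p.2))⁻¹ := le_min zero_le_one (by positivity)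
      rw [hmin, ENNReal.ofReal_mul (mul_nonneg hM hmn), ENNReal.ofReal_mul hM]
      unfold wt
      rw [ENNReal.ofReal_mul hmn, mul_assoc, mul_assoc, mul_assoc]
      exact mul_le_mul' le_rfl (mul_le_mul' le_rfl (hprod _ _))
    refine (Finset.sum_le_sum hb).trans ((double_sum hp hq hr hpqr (fun i => if i ∈ I then 0 else ENNReal.ofReal M * wt ρ i) α β P2).trans ?_)
    refine (mul_le_mul' hI.le h4).trans (le_of_eq ?_)
    rw [show (4 : ℝ≥0∞) = ENNReal.ofReal 4 by simp, ← ENNReal.ofReal_mul (by positivity)]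
    congr 1; ring
  -- main part
  have hwsum : ∑ p ∈ P1, ‖a p.1‖ * ‖a' p.2‖ ≤ L := by
    rw [← ENNReal.ofReal_le_ofReal_iff hLpos.le,
      ENNReal.ofReal_sum_of_nonneg (fun _ _ => by positivity)]
    have hb : ∀ p ∈ P1, ENNReal.ofReal (‖a p.1‖ * ‖a' p.2‖) ≤
        (fun i => if i ∈ I then ENNReal.ofReal (rbar ρ (2 ^ i)) else 0) (p.1 + p.2) *
          (α p.1 * β p.2) := by
      intro p hpP
      have hpI := (Finset.mem_filter.1 hpP).2
      simp only [hpI, if_true]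
      refine le_trans (ENNReal.ofReal_le_ofReal ?_) (hprod p.1 p.2)
      exact mul_le_mul (le_max_left _ _) (le_max_left _ _) (norm_nonneg _) (hA _)
    refine (Finset.sum_le_sum hb).trans ((double_sum hp hq hr hpqr
      (fun i => if i ∈ I then ENNReal.ofReal (rbar ρ (2 ^ i)) else 0) α β P1).trans ?_)
    refine (mul_le_mul' le_rfl h4).trans ?_
    rw [tsum_eq_sum (s := I) (fun i hi => by simp [hi]),
      Finset.sum_congr rfl (fun i hi => if_pos hi),
      ← ENNReal.ofReal_sum_of_nonneg (fun i _ => (hrp i).le),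
      show (4 : ℝ≥0∞) = ENNReal.ofReal 4 by simp,
      ← ENNReal.ofReal_mul (Finset.sum_nonneg fun j _ => (hrp j).le)]
    exact ENNReal.ofReal_le_ofReal (by rw [hL]; linarith)
  have hex : ∀ p : ℤ × ℤ, ∃ g ∈ imgSet iE₀ iF₀ iG₀ T,
      f p = iG₀ ((‖a p.1‖ * ‖a' p.2‖) • g) := fun p => exists_unit h0 _ _
  choose g hg hfg using hex
  obtain ⟨c, hc, hceq⟩ := mem_scaled (convex_convexHull ℝ (imgSet iE₀ iF₀ iG₀ T))
    (subset_convexHull ℝ _ ⟨0, 0, by simp, by simp, by simp⟩) P1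
    (fun p => ‖a p.1‖ * ‖a' p.2‖) g (fun _ _ => by positivity)
    (fun p _ => subset_convexHull ℝ _ (hg p)) hLpos hwsum
  have hmain : ∑ p ∈ P1, f p = iG₀ (L • c) := by
    rw [← hceq, map_sum]
    exact Finset.sum_congr rfl fun p _ => hfg p
  obtain ⟨d, hd, hcd⟩ := mem_iUnion₂.1 (htc hc)
  refine ⟨iG₀ (L • d), Finset.mem_image.2 ⟨d, htf.mem_toFinset.2 hd, rfl⟩, ?_⟩
  have hdecomp : T x y - iG₀ (L • d) = (T x y - ∑ p ∈ Gs ×ˢ Hs, f p) +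
      (∑ p ∈ P2, f p + iG₀ (L • (c - d))) := by
    rw [hsplit, hmain, smul_sub, map_sub]; abel
  have hlast : esumNorm iG₀ iG₁ (iG₀ (L • (c - d))) ≤ ENNReal.ofReal (δ / 4) := by
    refine (eKfun_le_left _ _ _ _).trans (ENNReal.ofReal_le_ofReal ?_)
    rw [Metric.mem_ball, dist_eq_norm, lt_div_iff₀ hLpos] at hcd
    rw [norm_smul, Real.norm_of_nonneg hLpos.le]
    linarith
  rw [hdecomp]
  refine (eKfun_add_le _ _ zero_le_one _ _).trans_lt ?_
  have hrest := (eKfun_add_le iG₀ iG₁ zero_le_one (∑ p ∈ P2, f p) (iG₀ (L • (c - d)))).trans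
    (add_le_add htail hlast)
  rw [← ENNReal.ofReal_add (by positivity) (by positivity)] at hrest
  refine (add_le_add hGH.le hrest).trans_lt ?_
  rw [← ENNReal.ofReal_add (by positivity) (by positivity), ENNReal.ofReal_lt_ofReal_iff hδ]
  linarith
end bil


lemma exists_rep {E₀ E₁ V : Type*} [NormedAddCommGroup E₀] [NormedSpace ℝ E₀]
    [NormedAddCommGroup E₁] [NormedSpace ℝ E₁] [AddCommGroup V] [Module ℝ V]
    {i₀ : E₀ →ₗ[ℝ] V} {i₁ : E₁ →ₗ[ℝ] V} {ρ : ℝ → ℝ} {q : ℝ≥0∞} {x : V} {c : ℝ≥0∞}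
    (h : eJNorm i₀ i₁ ρ q x < c) : ∃ a b, IsJRep i₀ i₁ x a b ∧
      eLq q (fun n => ENNReal.ofReal (max ‖a n‖ ((2 : ℝ) ^ n * ‖b n‖) / ρ ((2 : ℝ) ^ n))) < c := by
  unfold eJNorm at h
  simp only [iInf_lt_iff] at h
  obtain ⟨a, b, h1, h2⟩ := h
  exact ⟨a, b, h1, h2⟩

/-- Hayakawa-type theorem: if the restrictions of `T` to `E_k × F_k`
are compact into `G_k` (`k = 0,1`), then `T` is compact from
`(E₀,E₁)_{γ,p;J} × (F₀,F₁)_{ρ,q;J}` into `(G₀,G₁)_{ρ,r;J}`, for `ρ ∈ ℬ^{+-}`,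
`γ(t) = 1/ρ̄(t⁻¹)` and `1/r = 1/p + 1/q - 1`. -/
theorem statement6
    {E₀ E₁ F₀ F₁ G₀ G₁ VE VF VG : Type*}
    [NormedAddCommGroup E₀] [NormedSpace ℝ E₀] [NormedAddCommGroup E₁] [NormedSpace ℝ E₁]
    [NormedAddCommGroup F₀] [NormedSpace ℝ F₀] [NormedAddCommGroup F₁] [NormedSpace ℝ F₁]
    [NormedAddCommGroup G₀] [NormedSpace ℝ G₀] [NormedAddCommGroup G₁] [NormedSpace ℝ G₁]
    [AddCommGroup VE] [Module ℝ VE] [TopologicalSpace VE]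
    [AddCommGroup VF] [Module ℝ VF] [TopologicalSpace VF]
    [AddCommGroup VG] [Module ℝ VG] [TopologicalSpace VG]
    (iE₀ : E₀ →ₗ[ℝ] VE) (iE₁ : E₁ →ₗ[ℝ] VE) (hE : IsBanachCouple iE₀ iE₁)
    (iF₀ : F₀ →ₗ[ℝ] VF) (iF₁ : F₁ →ₗ[ℝ] VF) (hF : IsBanachCouple iF₀ iF₁)
    (iG₀ : G₀ →ₗ[ℝ] VG) (iG₁ : G₁ →ₗ[ℝ] VG) (hG : IsBanachCouple iG₀ iG₁)
    (T : VE →ₗ[ℝ] VF →ₗ[ℝ] VG)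
    (hbdd : eBilBdd (esumNorm iE₀ iE₁) (esumNorm iF₀ iF₁) (esumNorm iG₀ iG₁)
      (fun x y => T x y))
    (hb0 : eBilBdd (enormOf iE₀) (enormOf iF₀) (enormOf iG₀) (fun x y => T x y))
    (hb1 : eBilBdd (enormOf iE₁) (enormOf iF₁) (enormOf iG₁) (fun x y => T x y))
    (hc0 : eBilCompact (enormOf iE₀) (enormOf iF₀) (enormOf iG₀) (fun x y => T x y))
    (hc1 : eBilCompact (enormOf iE₁) (enormOf iF₁) (enormOf iG₁) (fun x y => T x y))
    (ρ : ℝ → ℝ) (hρ : IsClassBpm ρ)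
    (p q r : ℝ≥0∞) (hp : 1 ≤ p) (hq : 1 ≤ q) (hr : 1 ≤ r)
    (hpqr : 1 / r + 1 = 1 / p + 1 / q) :
    (∀ x y, eJNorm iE₀ iE₁ (fun t => (rbar ρ t⁻¹)⁻¹) p x ≠ ∞ → eJNorm iF₀ iF₁ ρ q y ≠ ∞ →
      eJNorm iG₀ iG₁ ρ r (T x y) ≠ ∞) ∧
    eBilCompact (eJNorm iE₀ iE₁ (fun t => (rbar ρ t⁻¹)⁻¹) p) (eJNorm iF₀ iF₁ ρ q)
      (eJNorm iG₀ iG₁ ρ r) (fun x y => T x y) := by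
  classical
  have hB := hρ.toIsClassB
  obtain ⟨M0, hM0, h0'⟩ := bdd_real hb0
  obtain ⟨M1, hM1, h1'⟩ := bdd_real hb1
  obtain ⟨M, hM, h0, h1⟩ : ∃ M : ℝ, 0 < M ∧
      (∀ a a', enormOf iG₀ (T (iE₀ a) (iF₀ a')) ≤ ENNReal.ofReal (M * ‖a‖ * ‖a'‖)) ∧
      (∀ a a', enormOf iG₁ (T (iE₁ a) (iF₁ a')) ≤ ENNReal.ofReal (M * ‖a‖ * ‖a'‖)) := by
    refine ⟨M0 + M1 + 1, by positivity, fun a a' => (h0' a a').trans ?_,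
      fun a a' => (h1' a a').trans ?_⟩
    · refine ENNReal.ofReal_le_ofReal ?_
      gcongr
      linarith
    · refine ENNReal.ofReal_le_ofReal ?_
      gcongr
      linarith
  have hP : ∀ n, PairBd iE₀ iE₁ iF₀ iF₁ iG₀ iG₁ T M M n := pairBd_of h0 h1
  obtain ⟨C, hC, hJK⟩ := eJ_le_eK hG hρ hr
  constructor
  · intro x y hx hy
    obtain ⟨a, b, hab, hlt⟩ := exists_rep (lt_top_iff_ne_top.2 hx)
    obtain ⟨a', b', hab', hlt'⟩ := exists_rep (lt_top_iff_ne_top.2 hy)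
    have hce := conv_est hbdd hB hp hq hr hpqr hab hab' hM.le hM.le (fun _ => True)
      (fun n _ => hP n)
    simp only [if_true] at hce
    have hne : eKNorm iG₀ iG₁ ρ r (T x y) ≠ ∞ := by
      refine ne_top_of_le_ne_top ?_ hce
      refine ENNReal.mul_ne_top (ne_top_of_le_ne_top
        (ENNReal.mul_ne_top ENNReal.ofReal_ne_top (wt_summable hρ)) (kerSize_ne_top hρ hM.le)) ?_
      exact ENNReal.mul_ne_top hlt.ne hlt'.ne
    exact ne_top_of_le_ne_top (ENNReal.mul_ne_top hC hne) (hJK _ hne)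
  · intro ε hε
    obtain ⟨η, hη, hηlt⟩ := exists_small hC (show 0 < ENNReal.ofReal ε by simpa using hε)
    obtain ⟨ε₁, hε₁, -, hk1, hk2⟩ := kerSize_small hρ hM
      (show 0 < ENNReal.ofReal (η / 32) by simpa using hη)
    obtain ⟨N₁, hN₁⟩ := eventually_atBot.1 (pair_atBot hM.le h1 hP hc0 hε₁)
    obtain ⟨N₂, hN₂⟩ := eventually_atTop.1 (pair_atTop hM.le h0 hP hc1 hε₁)
    set mid := Finset.Ioo N₁ N₂ with hmid
    set w : ℤ → ℝ≥0∞ := fun n =>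
      ENNReal.ofReal (max 1 ((2 : ℝ) ^ n / 1)) / ENNReal.ofReal (ρ (2 ^ n)) with hw
    set Cm := ∑ n ∈ mid, w n with hCm
    have hCmt : Cm ≠ ∞ := by
      refine ENNReal.sum_ne_top.2 fun n _ => ?_
      refine ENNReal.div_ne_top ENNReal.ofReal_ne_top ?_
      simpa using hB.pos _ (by positivity)
    set X := eLq r (fun n => if n ∈ mid then (1 : ℝ≥0∞) else 0) with hX
    have hXt : X ≠ ∞ := eLq_indicator_ne_top hr mid
    obtain ⟨δ, hδ, hδlt⟩ := exists_small (ENNReal.mul_ne_top hCmt hXt)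
      (show 0 < ENNReal.ofReal (η / 2) by simpa using hη)
    obtain ⟨D, hD⟩ := mid_net hG.inj₀ hbdd hρ hp hq hr hpqr hM.le h0 hP hc0
      (show 0 < δ / 2 by positivity)
    set s : Set (VE × VF) := {i | eJNorm iE₀ iE₁ (fun t => (rbar ρ t⁻¹)⁻¹) p i.1 ≤ 1 ∧
      eJNorm iF₀ iF₁ ρ q i.2 ≤ 1} with hs
    have hrep : ∀ i ∈ s, ∃ a b a' b', IsJRep iE₀ iE₁ i.1 a b ∧ IsJRep iF₀ iF₁ i.2 a' b' ∧
        eLq p (fun n => ENNReal.ofReal (max ‖a n‖ (2 ^ n * ‖b n‖) / (rbar ρ ((2 : ℝ) ^ n)⁻¹)⁻¹)) ≤ 2 ∧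
        eLq q (fun n => ENNReal.ofReal (max ‖a' n‖ (2 ^ n * ‖b' n‖) / ρ (2 ^ n))) ≤ 2 := by
      rintro i ⟨hi1, hi2⟩
      obtain ⟨a, b, hab, hlt⟩ := exists_rep (hi1.trans_lt one_lt_two)
      obtain ⟨a', b', hab', hlt'⟩ := exists_rep (hi2.trans_lt one_lt_two)
      exact ⟨a, b, a', b', hab, hab', hlt.le, hlt'.le⟩
    obtain ⟨t, ht, ht'⟩ := net_inside (esumNorm iG₀ iG₁)
      (fun x y z => eKfun_sub_sub_le iG₀ iG₁ zero_le_one x y z) D s (fun i => T i.1 i.2)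
      (ENNReal.ofReal (δ / 2)) (by
        intro i hi
        obtain ⟨a, b, a', b', hab, hab', hl, hl'⟩ := hrep i hi
        exact hD _ a b _ a' b' hab hab' hl hl')
    have hpiece : ∀ i ∈ s, ∀ (c₀ c₁ : ℝ), 0 ≤ c₀ → 0 ≤ c₁ → ∀ (S : ℤ → Prop) [DecidablePred S],
        (∀ n, S n → PairBd iE₀ iE₁ iF₀ iF₁ iG₀ iG₁ T c₀ c₁ n) →
        kerSize ρ c₀ c₁ ≤ ENNReal.ofReal (η / 32) →
        eLq r (fun n => if S n then eKfun iG₀ iG₁ (2 ^ n) (T i.1 i.2) /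
          ENNReal.ofReal (ρ (2 ^ n)) else 0) ≤ ENNReal.ofReal (η / 8) := by
      intro i hi c₀ c₁ hc₀ hc₁ S _ hS hk
      obtain ⟨a, b, a', b', hab, hab', hl, hl'⟩ := hrep i hi
      refine (conv_est hbdd hB hp hq hr hpqr hab hab' hc₀ hc₁ S hS).trans ?_
      refine (mul_le_mul' hk (mul_le_mul' hl hl')).trans (le_of_eq ?_)
      rw [show (2 : ℝ≥0∞) * 2 = ENNReal.ofReal 4 by norm_num,
        ← ENNReal.ofReal_mul (by positivity)]
      congr 1; ring
    refine ⟨t.image (fun i => T i.1 i.2), fun x y hx hy => ?_⟩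
    obtain ⟨j, hj, hjlt⟩ := ht' (x, y) ⟨hx, hy⟩
    refine ⟨T j.1 j.2, Finset.mem_image.2 ⟨j, hj, rfl⟩, ?_⟩
    have hjs := ht j hj
    have his : (x, y) ∈ s := ⟨hx, hy⟩
    set z := T x y with hz
    set c := T j.1 j.2 with hcdef
    rw [← ENNReal.ofReal_add (by positivity) (by positivity), _root_.add_halves] at hjlt
    let e : ℤ → VG → ℝ≥0∞ := fun n v => eKfun iG₀ iG₁ (2 ^ n) v / ENNReal.ofReal (ρ (2 ^ n))
    have he : ∀ n, e n (z - c) ≤ e n z + e n c := by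
      intro n
      simp only [e]
      rw [← ENNReal.add_div]
      exact ENNReal.div_le_div_right (eKfun_sub_le _ _ (by positivity) _ _) _
    have hK : eKNorm iG₀ iG₁ ρ r (z - c) ≤ ENNReal.ofReal η := by
      have hpt : ∀ n, e n (z - c) ≤ (if n ≤ N₁ then e n z else 0) + ((if n ≤ N₁ then e n c else 0) +
          ((if N₂ ≤ n then e n z else 0) + ((if N₂ ≤ n then e n c else 0) +
          (Cm * ENNReal.ofReal δ) * (if n ∈ mid then 1 else 0)))) := by
        intro n
        by_cases hn1 : n ≤ N₁
        · simp only [hn1, if_true]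
          rw [← add_assoc]
          exact (he n).trans le_self_add
        by_cases hn2 : N₂ ≤ n
        · simp only [hn1, hn2, if_true, if_false, zero_add]
          rw [← add_assoc]
          exact (he n).trans le_self_add
        have hnm : n ∈ mid := Finset.mem_Ioo.2 ⟨not_le.1 hn1, not_le.1 hn2⟩
        simp only [hn1, hn2, hnm, if_true, if_false, zero_add, mul_one]
        have hwn : w n ≤ Cm := Finset.single_le_sum (f := w) (fun _ _ => zero_le) hnm
        refine le_trans ?_ (mul_le_mul' hwn hjlt.le)
        simp only [e, hw]
        rw [ENNReal.mul_div_right_comm.symm]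
        exact ENNReal.div_le_div_right
          (eKfun_compare iG₀ iG₁ one_pos (by positivity) (z - c)) _
      have hp1 := hpiece _ his ε₁ M hε₁.le hM.le (fun n => n ≤ N₁) (fun n hn => hN₁ n hn) hk1
      have hp2 := hpiece _ hjs ε₁ M hε₁.le hM.le (fun n => n ≤ N₁) (fun n hn => hN₁ n hn) hk1
      have hp3 := hpiece _ his M ε₁ hM.le hε₁.le (fun n => N₂ ≤ n) (fun n hn => hN₂ n hn) hk2
      have hp4 := hpiece _ hjs M ε₁ hM.le hε₁.le (fun n => N₂ ≤ n) (fun n hn => hN₂ n hn) hk2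
      have hp5 : eLq r (fun n => (Cm * ENNReal.ofReal δ) * (if n ∈ mid then (1 : ℝ≥0∞) else 0)) ≤
          ENNReal.ofReal (η / 2) := by
        rw [eLq_const_mul hr, mul_right_comm]
        exact hδlt.le
      refine (eLq_mono r hpt).trans ?_
      have hsum := (eLq_add_le hr _ _).trans (add_le_add hp1 ((eLq_add_le hr _ _).trans
        (add_le_add hp2 ((eLq_add_le hr _ _).trans (add_le_add hp3 ((eLq_add_le hr _ _).trans
        (add_le_add hp4 hp5)))))))
      refine hsum.trans (le_of_eq ?_)
      rw [← ENNReal.ofReal_add (by positivity) (by positivity),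
        ← ENNReal.ofReal_add (by positivity) (by positivity),
        ← ENNReal.ofReal_add (by positivity) (by positivity),
        ← ENNReal.ofReal_add (by positivity) (by positivity)]
      congr 1; ring
    have hKt : eKNorm iG₀ iG₁ ρ r (z - c) ≠ ∞ := ne_top_of_le_ne_top ENNReal.ofReal_ne_top hK
    exact (hJK _ hKt).trans_lt ((mul_le_mul' le_rfl hK).trans_lt hηlt)
end

section
/- Let G be a linear space equipped with a sequence of norms (‖·‖_n)_{n∈ℤ} such that each G_n = (G,‖·‖_n) is a Banach space and such that (ℓ^q₀(G_n), ℓ^q₁(G_n)) forms a Banach couple. Let ρ be a function parameter of class ℬ^{+−} and 0 < q ≤ ∞. Then (ℓ^q₀(G_n), ℓ^q₁(G_n))_{ρ,q;K} = ℓ^q_f(G_n) with equivalent norms, where f(t) = 1/ρ(t⁻¹). -/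
open Filter Set MeasureTheory ENNReal NNReal

noncomputable section

variable {G : Type*} [AddCommGroup G] [Module ℝ G]

/-- The `ℓ^q_g(G_n)` extended norm of a sequence, for a weight function `g`:
`‖(a_n)‖ = ‖(g(2^{-n}) ‖a_n‖_n)_n‖_{ℓ^q(ℤ)}`. -/
def lqSeqNorm (Nn : ℤ → G → ℝ≥0∞) (q : ℝ≥0∞) (g : ℝ → ℝ) (a : ℤ → G) : ℝ≥0∞ :=
  eLq q (fun n => ENNReal.ofReal (g ((2 : ℝ) ^ (-n))) * Nn n (a n))

lemma aux_pos {ρ : ℝ → ℝ} (h : IsClassB ρ) (n : ℤ) : 0 < ρ ((2:ℝ)^n) := h.pos _ (by positivity)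

lemma aux_le {ρ : ℝ → ℝ} (h : IsClassB ρ) {s t : ℝ} (hs : 0 < s) (ht : 0 < t) :
    ρ (s * t) ≤ rbar ρ s * ρ t := by
  have := le_csSup (h.bdd s hs) ⟨t, ht, rfl⟩
  rwa [div_le_iff₀ (h.pos t ht)] at this

lemma aux_rbar_le {ρ : ℝ → ℝ} (h : IsClassB ρ) {s M : ℝ} 
    (hM : ∀ t > 0, ρ (s * t) ≤ M * ρ t) : rbar ρ s ≤ M := by
  have hne : {r : ℝ | ∃ t > 0, r = ρ (s * t) / ρ t}.Nonempty := ⟨_, 1, one_pos, rfl⟩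
  refine csSup_le hne ?_
  rintro r ⟨t, ht, rfl⟩
  rw [div_le_iff₀ (h.pos t ht)]
  exact hM t ht

lemma aux_rbar_pos {ρ : ℝ → ℝ} (h : IsClassB ρ) {s : ℝ} (hs : 0 < s) : 0 < rbar ρ s := by
  have h1 := aux_le h hs one_pos
  have h2 := h.pos (s * 1) (by positivity)
  rw [h.one] at h1
  linarith

def auxU (ρ : ℝ → ℝ) (j : ℤ) : ℝ≥0∞ := ENNReal.ofReal (min 1 ((2:ℝ)^j)⁻¹ * rbar ρ ((2:ℝ)^j))

lemma aux_set {ρ : ℝ → ℝ} (h : IsClassB ρ) : ∃ (A : Set ℝ) (N : ℕ), MeasurableSet A ∧ 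
    A ⊆ Set.Ico 1 2 ∧ volume A ≠ 0 ∧ 0 < N ∧ ∀ s ∈ A, ∀ t > 0, ρ (s⁻¹ * t) ≤ N * ρ t := by
  let B : ℕ → Set ℝ := fun N => Set.Ico 1 2 ∩ ⋂ (t : ℝ) (_ : 0 < t), 
    (Set.Icc 1 2 ∩ (fun s => ρ (s⁻¹ * t)) ⁻¹' Set.Iic (((N:ℝ)+1) * ρ t))
  have hBm : ∀ N, MeasurableSet (B N) := by
    intro N
    refine measurableSet_Ico.inter (IsClosed.measurableSet ?_)
    refine isClosed_biInter fun t ht => ?_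
    refine ContinuousOn.preimage_isClosed_of_isClosed ?_ isClosed_Icc isClosed_Iic
    refine h.cont.comp (ContinuousOn.mul (ContinuousOn.inv₀ continuousOn_id ?_) continuousOn_const) ?_
    · intro x hx; have := hx.1; linarith
    · intro x hx
      have : 0 < x := lt_of_lt_of_le one_pos hx.1
      exact mul_pos (inv_pos.2 this) ht
  by_contra hcon
  push Not at hcon
  have hz : ∀ N, volume (B N) = 0 := by
    intro N
    by_contra hne
    obtain ⟨s, hs, t, ht, hlt⟩ := hcon (B N) (N+1) (hBm N) Set.inter_subset_left hne (by omega)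
    have := hs.2
    simp only [Set.mem_iInter] at this
    have := (this t ht).2
    simp only [Set.mem_preimage, Set.mem_Iic] at this
    push_cast at hlt
    linarith
  have hU : volume (⋃ N, B N) = 0 := measure_iUnion_null hz
  have hsub : Set.Ico (1:ℝ) 2 ⊆ ⋃ N, B N := by
    intro s hs
    have hs0 : 0 < s := lt_of_lt_of_le one_pos hs.1
    obtain ⟨N, hN⟩ := exists_nat_ge (rbar ρ s⁻¹)
    refine Set.mem_iUnion.2 ⟨N, hs, ?_⟩
    simp only [Set.mem_iInter]
    intro t ht
    refine ⟨⟨hs.1, hs.2.le⟩, ?_⟩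
    simp only [Set.mem_preimage, Set.mem_Iic]
    refine (aux_le h (inv_pos.2 hs0) ht).trans ?_
    have := h.pos t ht
    gcongr
    linarith
  have := measure_mono_null hsub hU
  simp at this

lemma aux_sum {ρ : ℝ → ℝ} (h : IsClassBpm ρ) : ∑' j, auxU ρ j ≠ ∞ := by
  obtain ⟨A, N, hAm, hA, hA0, hN, hAN⟩ := aux_set h.toIsClassB
  have hB := h.toIsClassB
  let E : ℤ → Set ℝ := fun j => (fun t => ((2:ℝ)^j)⁻¹ * t) ⁻¹' A
  have hEm : ∀ j, MeasurableSet (E j) := fun j => (measurable_const_mul _) hAm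
  have hmem : ∀ j, ∀ t ∈ E j, (2:ℝ)^j ≤ t ∧ t < 2^(j+1) := by
    intro j t ht
    have h1 : ((2:ℝ)^j)⁻¹ * t ∈ Set.Ico (1:ℝ) 2 := hA ht
    have h2 : (0:ℝ) < 2^j := by positivity
    rw [zpow_add_one₀ (by norm_num)]
    constructor
    · have := h1.1
      rwa [inv_mul_eq_div, le_div_iff₀ h2, one_mul] at this
    · have := h1.2
      rwa [inv_mul_eq_div, div_lt_iff₀ h2, mul_comm] at this
  have hd : Pairwise (Function.onFun Disjoint E) := by
    intro i j hij
    refine Set.disjoint_left.2 fun t hi hj => hij ?_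
    have a := hmem i t hi
    have b := hmem j t hj
    have c := (zpow_lt_zpow_iff_right₀ (by norm_num : (1:ℝ) < 2)).1 (a.1.trans_lt b.2)
    have d := (zpow_lt_zpow_iff_right₀ (by norm_num : (1:ℝ) < 2)).1 (b.1.trans_lt a.2)
    omega
  have hfin : ∫⁻ t in Set.Ioi 0, ENNReal.ofReal (min 1 t⁻¹ * rbar ρ t * t⁻¹) ≠ ∞ := 
    h.integ.lintegral_lt_top.ne
  have hvA : volume A ≠ ∞ := by
    refine ((measure_mono hA).trans_lt ?_).ne
    simp
  let c : ℝ≥0∞ := ENNReal.ofReal (1/(4*(N:ℝ))) * volume A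
  have hN' : (0:ℝ) < N := by exact_mod_cast hN
  have hc0 : c ≠ 0 := mul_ne_zero (by simp; positivity) hA0
  have hc : c ≠ ∞ := ENNReal.mul_ne_top ENNReal.ofReal_ne_top hvA
  have hj : ∀ j, c * auxU ρ j ≤ ∫⁻ t in E j, ENNReal.ofReal (min 1 t⁻¹ * rbar ρ t * t⁻¹) := by
    intro j
    have h2 : (0:ℝ) < 2^j := by positivity
    have hv : volume (E j) = ENNReal.ofReal (2^j) * volume A := by
      simp only [E]
      rw [Real.volume_preimage_mul_left (by positivity), inv_inv, abs_of_pos h2]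
    calc c * auxU ρ j = ∫⁻ t in E j, ENNReal.ofReal 
          (1/(4*(N:ℝ)) * (min 1 ((2:ℝ)^j)⁻¹ * rbar ρ ((2:ℝ)^j)) * ((2:ℝ)^j)⁻¹) := by
          have hr := (aux_rbar_pos hB h2)
          rw [setLIntegral_const, hv, ← mul_assoc, ← ENNReal.ofReal_mul (by positivity)]
          simp only [c, auxU]
          rw [mul_right_comm, ← ENNReal.ofReal_mul (by positivity)]
          congr 2
          field_simp
      _ ≤ _ := by
          refine setLIntegral_mono' (hEm j) fun t ht => ?_
          have ht1 := hmem j t ht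
          rw [zpow_add_one₀ (by norm_num)] at ht1
          have ht0 : 0 < t := h2.trans_le ht1.1
          have hrt := aux_rbar_pos hB ht0
          have hr : rbar ρ ((2:ℝ)^j) ≤ N * rbar ρ t := by
            refine aux_rbar_le hB fun u hu => ?_
            have e1 := hAN _ ht (t * u) (by positivity)
            have e2 := aux_le hB ht0 hu
            have e3 : (((2:ℝ)^j)⁻¹ * t)⁻¹ * (t * u) = 2^j * u := by field_simp
            rw [e3] at e1
            calc _ ≤ _ := e1
              _ ≤ N * (rbar ρ t * ρ u) := by gcongr
              _ = _ := by ring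
          have hti : ((2:ℝ)^j)⁻¹ ≤ 2 * t⁻¹ := by
            rw [inv_le_iff_one_le_mul₀ h2]
            field_simp
            linarith
          have hm : min 1 ((2:ℝ)^j)⁻¹ ≤ 2 * min 1 t⁻¹ := by
            rcases le_total 1 t⁻¹ with h | h
            · rw [min_eq_left h]; have := min_le_left 1 ((2:ℝ)^j)⁻¹; linarith
            · rw [min_eq_right h]; exact (min_le_right _ _).trans hti
          apply ENNReal.ofReal_le_ofReal
          calc _ ≤ 1/(4*(N:ℝ)) * ((2 * min 1 t⁻¹) * (N * rbar ρ t)) * (2 * t⁻¹) := by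
                have := (aux_rbar_pos hB h2)
                gcongr
            _ = _ := by field_simp; ring
  have hle : c * ∑' j, auxU ρ j ≤ ∫⁻ t in Set.Ioi 0, ENNReal.ofReal (min 1 t⁻¹ * rbar ρ t * t⁻¹) := by
    rw [← ENNReal.tsum_mul_left]
    refine (ENNReal.tsum_le_tsum hj).trans ?_
    rw [← lintegral_iUnion hEm hd]
    refine lintegral_mono_set ?_
    refine Set.iUnion_subset fun j t ht => ?_
    exact lt_of_lt_of_le (by positivity) (hmem j t ht).1
  intro htop
  rw [htop, ENNReal.mul_top hc0, top_le_iff] at hle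
  exact hfin hle

lemma aux_mono {q : ℝ≥0∞} {a b : ℤ → ℝ≥0∞} (h : ∀ n, a n ≤ b n) : eLq q a ≤ eLq q b := by
  unfold eLq
  split_ifs
  · exact iSup_mono h
  · gcongr with n
    exact h n

lemma aux_smul {q : ℝ≥0∞} (hq : 0 < q) (c : ℝ≥0∞) (a : ℤ → ℝ≥0∞) : 
    eLq q (fun n => c * a n) = c * eLq q a := by
  unfold eLq
  split_ifs with h
  · rw [ENNReal.mul_iSup]
  · have hq' : 0 < q.toReal := ENNReal.toReal_pos hq.ne' h
    simp_rw [ENNReal.mul_rpow_of_nonneg _ _ hq'.le]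
    rw [ENNReal.tsum_mul_left, ENNReal.mul_rpow_of_nonneg _ _ (by positivity), ← ENNReal.rpow_mul,
      mul_one_div_cancel hq'.ne', ENNReal.rpow_one]

lemma aux_single {q : ℝ≥0∞} (hq : 0 < q) (a : ℤ → ℝ≥0∞) (n : ℤ) : a n ≤ eLq q a := by
  unfold eLq
  split_ifs with h
  · exact le_iSup a n
  · have hq' : 0 < q.toReal := ENNReal.toReal_pos hq.ne' h
    calc a n = (a n ^ q.toReal) ^ (1/q.toReal) := by
          rw [← ENNReal.rpow_mul, mul_one_div_cancel hq'.ne', ENNReal.rpow_one]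
      _ ≤ _ := by gcongr; exact ENNReal.le_tsum (f := fun n => a n ^ q.toReal) n

lemma aux_conv {q : ℝ≥0∞} (hq : 0 < q) (U z : ℤ → ℝ≥0∞) : 
    eLq q (fun n => eLq q (fun m => U (m - n) * z m)) ≤ eLq q U * eLq q z := by
  by_cases h : q = ∞
  · simp only [eLq, h, if_true]
    refine iSup_le fun n => iSup_le fun m => ?_
    gcongr
    · exact le_iSup U _
    · exact le_iSup z _
  · have hq' : 0 < q.toReal := ENNReal.toReal_pos hq.ne' h
    simp only [eLq, h, if_false]
    simp_rw [← ENNReal.rpow_mul, one_div_mul_cancel hq'.ne', ENNReal.rpow_one]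
    rw [← ENNReal.mul_rpow_of_nonneg _ _ (by positivity), ENNReal.tsum_comm]
    simp_rw [ENNReal.mul_rpow_of_nonneg _ _ hq'.le, ENNReal.tsum_mul_right]
    have : ∀ m : ℤ, ∑' n : ℤ, U (m - n) ^ q.toReal = ∑' j, U j ^ q.toReal := fun m =>
      (Equiv.subLeft m).tsum_eq (fun j => U j ^ q.toReal)
    simp_rw [this, ENNReal.tsum_mul_left]
    exact le_rfl

lemma aux_fin {q : ℝ≥0∞} (hq : 1 ≤ q) (U : ℤ → ℝ≥0∞) (hU : ∑' j, U j ≠ ∞) : eLq q U ≠ ∞ := by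
  unfold eLq
  split_ifs with h
  · refine ne_top_of_le_ne_top hU (iSup_le fun n => ENNReal.le_tsum n)
  · have hq' : 1 ≤ q.toReal := by
      rw [← ENNReal.toReal_one]; exact (ENNReal.toReal_le_toReal (by simp) h).2 hq
    refine ENNReal.rpow_ne_top_of_nonneg (by positivity) ?_
    refine ne_top_of_le_ne_top (b := (∑' j, U j) * (∑' j, U j) ^ (q.toReal - 1)) ?_ ?_
    · exact ENNReal.mul_ne_top hU (ENNReal.rpow_ne_top_of_nonneg (by linarith) hU)
    · rw [← ENNReal.tsum_mul_right]
      refine ENNReal.tsum_le_tsum fun j => ?_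
      calc U j ^ q.toReal = U j ^ (1 + (q.toReal - 1)) := by congr 1; ring
        _ = U j * U j ^ (q.toReal - 1) := by
            rw [ENNReal.rpow_add_of_nonneg _ _ zero_le_one (by linarith), ENNReal.rpow_one]
        _ ≤ _ := by gcongr; exact ENNReal.le_tsum j

lemma aux_triv {G : Type*} [AddCommGroup G] [Module ℝ G] (Nn : ℤ → G → ℝ≥0∞)
    (hN : ∀ n, IsENorm (Nn n)) (hfin : ∀ n x, Nn n x ≠ ∞) (q : ℝ≥0∞) (hq : 0 < q) (hq1 : q < 1)
    (h : IsENorm (lqSeqNorm Nn q (fun _ => 1))) (g : G) : g = 0 := by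
  by_contra hg
  have hqt : q ≠ ∞ := (hq1.trans_le le_top).ne
  have hq' : 0 < q.toReal := ENNReal.toReal_pos hq.ne' hqt
  have hq1' : q.toReal < 1 := by
      rw [← ENNReal.toReal_one]; exact (ENNReal.toReal_lt_toReal hqt (by simp)).2 hq1
  have key : ∀ n, ∃ e, Nn n e = 1 := by
    intro n
    have h0 : Nn n g ≠ 0 := fun h => hg ((hN n).eq_zero g h)
    refine ⟨(Nn n g).toReal⁻¹ • g, ?_⟩
    have hp : 0 < (Nn n g).toReal := ENNReal.toReal_pos h0 (hfin n g)
    rw [(hN n).smul, abs_of_pos (inv_pos.2 hp), ENNReal.ofReal_inv_of_pos hp, 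
      ENNReal.ofReal_toReal (hfin n g), ENNReal.inv_mul_cancel h0 (hfin n g)]
  choose e he using key
  have hs : ∀ k, lqSeqNorm Nn q (fun _ => 1) (Pi.single k (e k)) = 1 := by
    intro k
    simp only [lqSeqNorm, eLq, hqt, if_false]
    rw [tsum_eq_single k]
    · simp [he]
    · intro m hm
      simp [Pi.single_eq_of_ne hm, (hN m).map_zero, hq']
  have h2 := h.add_le (Pi.single 0 (e 0)) (Pi.single 1 (e 1))
  rw [hs, hs] at h2
  have h3 : (2:ℝ≥0∞) ^ (1/q.toReal) ≤ lqSeqNorm Nn q (fun _ => 1) (Pi.single 0 (e 0) + Pi.single 1 (e 1)) := by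
    simp only [lqSeqNorm, eLq, hqt, if_false]
    gcongr
    refine le_trans ?_ (ENNReal.sum_le_tsum {0, 1})
    rw [Finset.sum_pair (by norm_num)]
    simp [he]
    norm_num
  have h4 := h3.trans h2
  rw [one_add_one_eq_two] at h4
  have h5 : (2:ℝ≥0∞) ^ (1:ℝ) < (2:ℝ≥0∞) ^ (1/q.toReal) := 
    ENNReal.rpow_lt_rpow_of_exponent_lt (by norm_num) (by simp) (by rw [one_div]; exact (one_lt_inv₀ hq').2 hq1')
  rw [ENNReal.rpow_one] at h5
  exact absurd h4 (not_le.2 h5)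

lemma aux_K {G : Type*} [AddCommGroup G] [Module ℝ G] (Nn : ℤ → G → ℝ≥0∞)
    (hN : ∀ n, IsENorm (Nn n)) (q : ℝ≥0∞) (hq : 0 < q) (a : ℤ → G) (n : ℤ) :
    eKgen (lqSeqNorm Nn q (fun _ => 1)) (lqSeqNorm Nn q (fun t => t)) ((2:ℝ)^n) a ≤
      2 * eLq q (fun m => ENNReal.ofReal (min 1 ((2:ℝ)^(m-n))⁻¹) * Nn m (a m)) := by
  refine (iInf_le _ (fun m => if m ≤ n then 0 else a m)).trans ?_
  rw [two_mul]
  simp only [lqSeqNorm]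
  rw [← aux_smul hq]
  refine add_le_add (aux_mono fun m => ?_) (aux_mono fun m => ?_)
  · by_cases h : m ≤ n
    · have : (1:ℝ) ≤ ((2:ℝ)^(m-n))⁻¹ := by
        rw [← zpow_neg]; exact one_le_zpow₀ (by norm_num) (by omega)
      rw [min_eq_left this]
      simp [h]
    · simp [h, (hN m).map_zero]
  · by_cases h : m ≤ n
    · simp [h, (hN m).map_zero]
    · have : ((2:ℝ)^(m-n))⁻¹ ≤ 1 := by
        apply inv_le_one_of_one_le₀; exact one_le_zpow₀ (by norm_num) (by omega)
      rw [min_eq_right this, ← mul_assoc, ← ENNReal.ofReal_mul (by positivity),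
        ← zpow_add₀ (by norm_num), ← zpow_neg]
      simp only [h, if_false]
      rw [show n + -m = -(m-n) by ring]

lemma aux_lower {G : Type*} [AddCommGroup G] [Module ℝ G] (Nn : ℤ → G → ℝ≥0∞)
    (hN : ∀ n, IsENorm (Nn n)) (q : ℝ≥0∞) (hq : 0 < q) (a : ℤ → G) (n : ℤ) :
    Nn n (a n) ≤ eKgen (lqSeqNorm Nn q (fun _ => 1)) (lqSeqNorm Nn q (fun t => t)) ((2:ℝ)^n) a := by
  refine le_iInf fun y => ?_
  have h1 := aux_single hq (fun n => ENNReal.ofReal 1 * Nn n ((a - y) n)) n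
  have h2 := aux_single hq (fun n => ENNReal.ofReal ((2:ℝ)^(-n)) * Nn n (y n)) n
  calc Nn n (a n) = Nn n ((a - y) n + y n) := by simp
    _ ≤ _ := (hN n).add_le _ _
    _ = ENNReal.ofReal 1 * Nn n ((a - y) n) + 
        ENNReal.ofReal ((2:ℝ)^n) * (ENNReal.ofReal ((2:ℝ)^(-n)) * Nn n (y n)) := by
      rw [← mul_assoc, ← ENNReal.ofReal_mul (by positivity), ← zpow_add₀ (by norm_num)]
      simp
    _ ≤ _ := by
      simp only [lqSeqNorm]
      gcongr

lemma aux_upper {G : Type*} [AddCommGroup G] [Module ℝ G] (Nn : ℤ → G → ℝ≥0∞)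
    (hN : ∀ n, IsENorm (Nn n)) (ρ : ℝ → ℝ) (hρ : IsClassBpm ρ) (q : ℝ≥0∞) (hq : 0 < q) (a : ℤ → G) :
    eKNormGen (lqSeqNorm Nn q (fun _ => 1)) (lqSeqNorm Nn q (fun t => t)) ρ q a ≤
      2 * (eLq q (auxU ρ) * lqSeqNorm Nn q (fun t => (ρ t⁻¹)⁻¹) a) := by
  have hB := hρ.toIsClassB
  refine le_trans ?_ (mul_le_mul_right (aux_conv hq _ _) 2)
  rw [← aux_smul hq]
  refine aux_mono fun n => ?_
  rw [ENNReal.div_eq_inv_mul]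
  refine (mul_le_mul_right (aux_K Nn hN q hq a n) _).trans ?_
  rw [mul_left_comm]
  gcongr
  rw [← aux_smul hq]
  refine aux_mono fun m => ?_
  rw [← mul_assoc, ← mul_assoc]
  refine mul_le_mul_left ?_ _
  have pn := aux_pos hB n
  have pm := aux_pos hB m
  have h2 : (0:ℝ) < 2^(m-n) := by positivity
  have pr := aux_rbar_pos hB h2
  rw [auxU, ← ENNReal.ofReal_inv_of_pos pn, ← ENNReal.ofReal_mul (by positivity), 
    ← ENNReal.ofReal_mul (by positivity)]
  apply ENNReal.ofReal_le_ofReal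
  have := aux_le hB h2 (by positivity : (0:ℝ) < 2^n)
  rw [← zpow_add₀ (by norm_num), sub_add_cancel] at this
  beta_reduce
  rw [← zpow_neg (2:ℝ) (-m), neg_neg, mul_comm, mul_assoc]
  gcongr
  rw [← div_eq_mul_inv, le_div_iff₀ pm, inv_mul_le_iff₀ pn]
  linarith

/-- Theorem 2.1: let `G` carry a sequence of Banach norms `(‖·‖_n)_{n∈ℤ}`
such that `(ℓ^q₀(G_n), ℓ^q₁(G_n))` is a Banach couple. Then for `ρ ∈ ℬ^{+-}` and
`0 < q ≤ ∞`, `(ℓ^q₀(G_n), ℓ^q₁(G_n))_{ρ,q;K} = ℓ^q_f(G_n)` with equivalent norms,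
where `f(t) = 1/ρ(t⁻¹)`. -/
theorem statement8 (Nn : ℤ → G → ℝ≥0∞)
    (hN : ∀ n, IsENorm (Nn n)) (hfin : ∀ n x, Nn n x ≠ ∞)
    (ρ : ℝ → ℝ) (hρ : IsClassBpm ρ) (q : ℝ≥0∞) (hq : 0 < q)
    (hcouple₀ : IsENorm (lqSeqNorm Nn q (fun _ => 1)))
    (hcouple₁ : IsENorm (lqSeqNorm Nn q (fun t => t))) :
    ∃ C > 0, ∀ a : ℤ → G,
      eKNormGen (lqSeqNorm Nn q (fun _ => 1)) (lqSeqNorm Nn q (fun t => t)) ρ q a ≤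
        ENNReal.ofReal C * lqSeqNorm Nn q (fun t => (ρ t⁻¹)⁻¹) a ∧
      lqSeqNorm Nn q (fun t => (ρ t⁻¹)⁻¹) a ≤
        ENNReal.ofReal C *
          eKNormGen (lqSeqNorm Nn q (fun _ => 1)) (lqSeqNorm Nn q (fun t => t)) ρ q a := by
  have hB := hρ.toIsClassB
  refine ⟨(2 * eLq q (auxU ρ)).toReal + 1, by positivity, fun a => ⟨?_, ?_⟩⟩
  · refine (aux_upper Nn hN ρ hρ q hq a).trans ?_
    rcases lt_or_ge q 1 with h1 | h1
    · have ha : a = 0 := funext fun n => aux_triv Nn hN hfin q hq h1 hcouple₀ (a n)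
      have hq' : 0 < q.toReal := ENNReal.toReal_pos hq.ne' (h1.trans_le le_top).ne
      have : lqSeqNorm Nn q (fun t => (ρ t⁻¹)⁻¹) a = 0 := by
        subst ha
        simp [lqSeqNorm, eLq, (h1.trans_le le_top).ne, (hN _).map_zero, hq']
      simp [this]
    · have hD : 2 * eLq q (auxU ρ) ≠ ∞ :=
        ENNReal.mul_ne_top (by simp) (aux_fin h1 _ (aux_sum hρ))
      rw [← mul_assoc]
      gcongr
      rw [ENNReal.ofReal_add (by positivity) (by positivity), ENNReal.ofReal_toReal hD]
      exact le_self_add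
  · have hone : (1:ℝ≥0∞) ≤ ENNReal.ofReal ((2 * eLq q (auxU ρ)).toReal + 1) := by
      rw [ENNReal.one_le_ofReal]
      have : 0 ≤ (2 * eLq q (auxU ρ)).toReal := ENNReal.toReal_nonneg
      linarith
    refine le_trans ?_ (le_mul_of_one_le_left (zero_le) hone)
    refine aux_mono fun n => ?_
    beta_reduce
    rw [ENNReal.div_eq_inv_mul, ← ENNReal.ofReal_inv_of_pos (aux_pos hB n), ← zpow_neg, neg_neg]
    gcongr
    exact aux_lower Nn hN q hq a n

end
end

section
/- Let ρ be a function parameter of class ℬ^{+−}. Then ρ̄(t) = o(max(1,t)) as t → 0⁺ and as t → ∞; that is, ρ̄(t) → 0 as t → 0⁺ and ρ̄(t)/t → 0 as t → ∞. In particular ℬ^{+−} is contained in Peetre's class 𝒫^{+−}. -/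
open Filter Set MeasureTheory ENNReal NNReal

theorem aux_decay (g : ℝ → ℝ) (h0 : ∀ x, 0 ≤ g x) (hsub : ∀ x y, g (x + y) ≤ g x * g y)
    (hint : IntegrableOn g (Set.Ioi 0)) : Tendsto g atTop (nhds 0) := by
  set I := ∫ y in Set.Ioi 0, g y with hI
  have key : ∀ x > 0, x * Real.sqrt (g x) ≤ I := by
    intro x hx
    have hii : IntervalIntegrable g volume 0 x := by
      rw [intervalIntegrable_iff_integrableOn_Ioc_of_le hx.le]
      exact hint.mono_set Ioc_subset_Ioi_self
    have hii2 : IntervalIntegrable (fun y => g (x - y)) volume 0 x := by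
      have := (hii.comp_sub_left x).symm
      simpa using this
    have h1 : ∫ y in (0:ℝ)..x, g (x - y) = ∫ y in (0:ℝ)..x, g y := by
      rw [intervalIntegral.integral_comp_sub_left]; simp
    have h2 : ∫ y in (0:ℝ)..x, Real.sqrt (g x) ≤ ∫ y in (0:ℝ)..x, (g y + g (x - y)) / 2 := by
      apply intervalIntegral.integral_mono_on hx.le
      · simp
      · exact (hii.add hii2).div_const 2
      · intro y _
        have h3 := hsub y (x - y)
        rw [add_sub_cancel] at h3
        apply Real.sqrt_le_iff.2
        constructor
        · linarith [h0 y, h0 (x - y)]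
        · nlinarith [sq_nonneg (g y - g (x - y))]
    rw [intervalIntegral.integral_div, intervalIntegral.integral_add hii hii2, h1] at h2
    have h4 : ∫ y in (0:ℝ)..x, g y ≤ I := by
      rw [intervalIntegral.integral_of_le hx.le]
      exact setIntegral_mono_set hint (Eventually.of_forall h0)
        (Eventually.of_forall Ioc_subset_Ioi_self)
    simp at h2
    linarith
  have hlim : Tendsto (fun x : ℝ => (I / x) ^ 2) atTop (nhds 0) := by
    have := (tendsto_const_nhds (x := I)).div_atTop (tendsto_id (α := ℝ) (x := atTop))
    simpa using this.pow 2
  refine tendsto_of_tendsto_of_tendsto_of_le_of_le' tendsto_const_nhds hlim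
    (Eventually.of_forall h0) ?_
  filter_upwards [eventually_gt_atTop 0] with x hx
  have h5 : Real.sqrt (g x) ≤ I / x := by
    rw [le_div_iff₀ hx]; linarith [key x hx]
  calc g x = Real.sqrt (g x) ^ 2 := (Real.sq_sqrt (h0 x)).symm
    _ ≤ _ := by gcongr

theorem aux_exp (h : ℝ → ℝ) (hh : IntegrableOn h (Set.Ioi 0)) :
    Integrable (fun x => Real.exp x * h (Real.exp x)) := by
  have := integrableOn_image_iff_integrableOn_abs_deriv_smul (s := Set.univ) (f := Real.exp)
    (f' := Real.exp) MeasurableSet.univ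
    (fun x _ => (Real.hasDerivAt_exp x).hasDerivWithinAt) Real.exp_injective.injOn h
  rw [Set.image_univ, Real.range_exp] at this
  have h2 := this.1 hh
  simpa [abs_of_pos (Real.exp_pos _)] using h2

theorem statement12 (ρ : ℝ → ℝ) (hρ : IsClassBpm ρ) :
    Filter.Tendsto (rbar ρ) (nhdsWithin 0 (Set.Ioi 0)) (nhds 0) ∧
    Filter.Tendsto (fun t => rbar ρ t / t) Filter.atTop (nhds 0) ∧
    IsPseudoConcave ρ := by
  have hle : ∀ s > 0, ∀ t > 0, ρ (s * t) ≤ rbar ρ s * ρ t := by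
    intro s hs t ht
    rw [← div_le_iff₀ (hρ.pos t ht)]
    exact le_csSup (hρ.bdd s hs) ⟨t, ht, rfl⟩
  have hpos : ∀ s > 0, 0 < rbar ρ s := by
    intro s hs
    have h1 := hle s hs 1 one_pos
    rw [hρ.one, mul_one, mul_one] at h1
    exact (hρ.pos s hs).trans_le h1
  have hsub : ∀ s > 0, ∀ t > 0, rbar ρ (s * t) ≤ rbar ρ s * rbar ρ t := by
    intro s hs t ht
    refine csSup_le (s := {r : ℝ | ∃ u > 0, r = ρ (s * t * u) / ρ u}) ⟨_, 1, one_pos, rfl⟩ ?_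
    rintro r ⟨u, hu, rfl⟩
    rw [div_le_iff₀ (hρ.pos u hu), mul_assoc s t u]
    calc ρ (s * (t * u)) ≤ rbar ρ s * ρ (t * u) := hle s hs _ (mul_pos ht hu)
      _ ≤ rbar ρ s * (rbar ρ t * ρ u) :=
        mul_le_mul_of_nonneg_left (hle t ht u hu) (hpos s hs).le
      _ = _ := by ring
  have hH := aux_exp _ hρ.integ
  have A1 : Tendsto (fun x => rbar ρ (Real.exp (-x))) atTop (nhds 0) := by
    apply aux_decay
    · exact fun x => (hpos _ (Real.exp_pos _)).le
    · intro x y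
      rw [neg_add, Real.exp_add]
      exact hsub _ (Real.exp_pos _) _ (Real.exp_pos _)
    · refine (hH.comp_neg.integrableOn (s := Set.Ioi 0)).congr_fun ?_ measurableSet_Ioi
      intro x hx
      have hx : 0 < x := hx
      have h1 : (1:ℝ) ≤ (Real.exp (-x))⁻¹ := by
        rw [← Real.exp_neg, neg_neg]; exact Real.one_le_exp hx.le
      have := (Real.exp_pos (-x)).ne'
      simp only [min_eq_left h1]
      field_simp
  have A2 : Tendsto (fun x => rbar ρ (Real.exp x) / Real.exp x) atTop (nhds 0) := by
    apply aux_decay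
    · exact fun x => (div_pos (hpos _ (Real.exp_pos _)) (Real.exp_pos _)).le
    · intro x y
      rw [Real.exp_add, div_mul_div_comm]
      exact div_le_div_of_nonneg_right (hsub _ (Real.exp_pos _) _ (Real.exp_pos _))
        (by positivity)
    · refine (hH.integrableOn (s := Set.Ioi 0)).congr_fun ?_ measurableSet_Ioi
      intro x hx
      have hx : 0 < x := hx
      have h1 : (Real.exp x)⁻¹ ≤ 1 := by
        rw [← Real.exp_neg]; exact Real.exp_le_one_iff.2 (by linarith)
      have := (Real.exp_pos x).ne'
      simp only [min_eq_right h1]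
      field_simp
  have B1 : Tendsto (rbar ρ) (nhdsWithin 0 (Set.Ioi 0)) (nhds 0) := by
    have := A1.comp (tendsto_neg_atBot_atTop.comp Real.tendsto_log_nhdsGT_zero)
    refine this.congr' ?_
    filter_upwards [self_mem_nhdsWithin] with t ht
    simp [Real.exp_log (show 0 < t from ht)]
  have B2 : Tendsto (fun t => rbar ρ t / t) atTop (nhds 0) := by
    refine (A2.comp Real.tendsto_log_atTop).congr' ?_
    filter_upwards [eventually_gt_atTop 0] with t ht
    simp [Real.exp_log ht]
  refine ⟨B1, B2, ?_⟩
  obtain ⟨δ, hδ, h1⟩ := mem_nhdsGT_iff_exists_Ioc_subset.1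
    (B1.eventually (eventually_le_nhds (zero_lt_one' ℝ)))
  obtain ⟨A, hA, h2⟩ := ((B2.eventually (eventually_le_nhds (zero_lt_one' ℝ))).and
    (eventually_gt_atTop 0)).exists_forall_of_atTop.imp
      fun a ha => (⟨(ha a le_rfl).2, fun t ht => (ha t ht).1⟩ : 0 < a ∧ ∀ t ≥ a, rbar ρ t / t ≤ 1)
  have hδ : 0 < δ := hδ
  have hAδ : 0 < A / δ := div_pos hA hδ
  refine ⟨1 + rbar ρ (A / δ), by linarith [hpos _ hAδ], ?_⟩
  intro s hs t ht
  have hu : 0 < t / s := div_pos ht hs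
  have h3 := hle (t / s) hu s hs
  rw [div_mul_cancel₀ _ hs.ne'] at h3
  refine h3.trans (mul_le_mul_of_nonneg_right ?_ (hρ.pos s hs).le)
  generalize t / s = u at hu
  have hM := hpos _ hAδ
  have m1 := le_max_left 1 u
  have m2 := le_max_right 1 u
  rcases le_total A u with hc | hc
  · have := h2 u hc
    rw [div_le_one hu] at this
    nlinarith
  · have h5 : 0 < u / (A / δ) := div_pos hu hAδ
    have h6 : u / (A / δ) ≤ δ := by
      rw [div_le_iff₀ hAδ, mul_div_cancel₀ _ hδ.ne']; exact hc
    have h7 : rbar ρ (u / (A / δ)) ≤ 1 := h1 ⟨h5, h6⟩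
    have h8 := hsub _ h5 _ hAδ
    rw [div_mul_cancel₀ _ hAδ.ne'] at h8
    nlinarith
end
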